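/- Let n ≥ 2. Let B_n^B be the group presented by generators σ_0, σ_1, …, σ_{n−1} subject to: (BB1) σ_0σ_1σ_0σ_1 = σ_1σ_0σ_1σ_0; (BB2) σ_iσ_jσ_i = σ_jσ_iσ_j for i, j ≥ 1 with |i−j| = 1; (BB3) σ_iσ_j = σ_jσ_i for i, j ≥ 0 with |i−j| ≥ 2; and let π : B_n^B → Perm([±n]) be the group homomorphism with π(σ_0) = t_0 the transposition of −1 and 1, and π(σ_i) = t_i the permutation simultaneously swapping i with i+1 and −i with −(i+1) (these are permutations commuting with negation). Let TB be the monoid presented by generators s_i, s_i', θ_i (0 ≤ i ≤ n−1) subject to: (BB0) s_i s_i' = s_i' s_i = 1; (BB1)–(BB3) with σ replaced by s; (TB1) θ_i² = θ_i; (TB2) θ_i θ_j = θ_j θ_i; (TB3) θ_0 s_1 s_0 s_1 = s_1 s_0 s_1 θ_0 and θ_1 s_0 s_1 s_0 = s_0 s_1 s_0 θ_1; (TB4) s_i s_j θ_i = θ_j s_i s_j for i, j ≥ 1 with |i−j| = 1; (TB5) s_i θ_j = θ_j s_i for |i−j| ≠ 1; (TB6) θ_i θ_j s_i = θ_j s_i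 θ_j = s_i θ_i θ_j for i, j ≥ 0 with |i−j| = 1; (TB7) θ_1 s_0 θ_1 s_0 = s_0 θ_1 s_0 θ_1 and θ_0 s_1 θ_0 s_1 = s_1 θ_0 s_1 θ_0; (TB8) s_1 s_1 θ_0 = θ_0 s_1 s_1 and s_0 s_0 θ_1 = θ_1 s_0 s_0; (TB9) s_i s_j' θ_i = θ_j s_i s_j' for i, j ≥ 1 with |i−j| = 1. Then there is a bijection F : TB → P_n^B × B_n^B such that F(1) = (⊥, 1), F(s_i) = (⊥, σ_i), F(s_i') = (⊥, σ_i⁻¹), F(θ_0) = (ε_{−1,1}, 1), F(θ_i) = (ε_{i,i+1}, 1) for i ≥ 1, and F(x·y) = (F(x)₁ ·_B (π(F(x)₂) • F(y)₁), F(x)₂ · F(y)₂) for all x, y, where w • I is the transported partition (x ∼_{w•I} y iff w⁻¹x ∼_I w⁻¹y) and ·_B is the least-upper-bound product on P_n^B. -/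

import Mathlib

instance setoidCommMonoid (α : Type*) : CommMonoid (Setoid α) where
  mul := (· ⊔ ·)
  one := ⊥
  mul_assoc := sup_assoc
  one_mul := bot_sup_eq
  mul_one := sup_bot_eq
  mul_comm := sup_comm

def muSet {α : Type*} (X : Set α) : Setoid α :=
  Relation.EqvGen.setoid (fun x y => x ∈ X ∧ y ∈ X)

def mu {α : Type*} (i j : α) : Setoid α := muSet {i, j}

/-- `[±n]`: nonzero integers of absolute value at most `n`, with the order from `ℤ`. -/
abbrev PM (n : ℕ) := {k : ℤ // k ≠ 0 ∧ |k| ≤ (n : ℤ)}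

namespace PM

/-- The negation involution `k ↦ -k` on `[±n]`. -/
def neg {n : ℕ} (x : PM n) : PM n :=
  ⟨-x.1, by obtain ⟨h1, h2⟩ := x.2; exact ⟨neg_ne_zero.mpr h1, by rwa [abs_neg]⟩⟩

@[simp] theorem neg_neg {n : ℕ} (x : PM n) : x.neg.neg = x := Subtype.ext (by simp [neg])

theorem neg_lt_neg {n : ℕ} {x y : PM n} (h : x < y) : y.neg < x.neg := by
  have h' : x.1 < y.1 := Subtype.coe_lt_coe.mpr h
  rw [← Subtype.coe_lt_coe]
  show -y.1 < -x.1
  omega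

theorem neg_lt_pos {n : ℕ} {x y : PM n} (hx : 0 < x.1) (hy : 0 < y.1) : x.neg < y := by
  rw [← Subtype.coe_lt_coe]
  show -x.1 < y.1
  omega

theorem pos_ne_neg {n : ℕ} {x y : PM n} (hx : 0 < x.1) (hy : 0 < y.1) : y ≠ x.neg := by
  intro h
  have : y.1 = -x.1 := congrArg Subtype.val h
  omega

theorem neg_lt_self {n : ℕ} {x : PM n} (hx : 0 < x.1) : x.neg < x := neg_lt_pos hx hx

/-- The absolute value map `x ↦ |x|` from `[±n]` to its positive part. -/
def abs {n : ℕ} (x : PM n) : PM n :=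
  ⟨|x.1|, by obtain ⟨h1, h2⟩ := x.2; exact ⟨abs_ne_zero.mpr h1, by rwa [abs_abs]⟩⟩

end PM

/-- Image of a subset of `[±n]` under negation. -/
def negSet {n : ℕ} (K : Set (PM n)) : Set (PM n) := PM.neg '' K

/-- The partition `I⁻` transported along negation: `x ∼ y` in `negPart I` iff `-x ∼ -y` in `I`. -/
def negPart {n : ℕ} (I : Setoid (PM n)) : Setoid (PM n) := Setoid.comap PM.neg I

/-- A set partition `I` of `[±n]` is *signed* if for every block `K` of `I` the set `-K` is
also a block; equivalently, `x ∼ y ↔ -x ∼ -y` for all `x, y`. -/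
def IsSigned {n : ℕ} (I : Setoid (PM n)) : Prop :=
  ∀ x y : PM n, I x y ↔ I (PM.neg x) (PM.neg y)

/-- A *zero block* of a partition `I` is a block `K` with `-K = K`. -/
def IsZeroBlock {n : ℕ} (I : Setoid (PM n)) (K : Set (PM n)) : Prop :=
  K ∈ I.classes ∧ negSet K = K

/-- A `Bₙ`-partition: a signed partition of `[±n]` with at most one zero block. -/
def IsBPart {n : ℕ} (I : Setoid (PM n)) : Prop :=
  IsSigned I ∧ Set.Subsingleton {K | IsZeroBlock I K}

/-- A *restricted* signed partition: all its zero blocks have more than two elements. -/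
def IsRestricted {n : ℕ} (I : Setoid (PM n)) : Prop :=
  IsSigned I ∧ ∀ K : Set (PM n), IsZeroBlock I K → 2 < K.ncard

/-- A `Dₙ`-partition: a `Bₙ`-partition whose zero block (if present) has more than two
elements. -/
def IsDPart {n : ℕ} (I : Setoid (PM n)) : Prop :=
  IsBPart I ∧ ∀ K : Set (PM n), IsZeroBlock I K → 2 < K.ncard

/-- For `i < j` in `[±n]`, the signed partition `ε_{i,j} = μ_{-j,-i} ⊔ μ_{i,j}`. -/
def eps {n : ℕ} (i j : PM n) : Setoid (PM n) := mu (PM.neg j) (PM.neg i) ⊔ mu i j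

/-- Transport of a partition along a permutation: `x ∼ y` in `w • I` iff
`w⁻¹ x ∼ w⁻¹ y` in `I`. -/
def permAct {β : Type*} (w : Equiv.Perm β) (I : Setoid β) : Setoid β :=
  Setoid.comap w.symm I

/-- `|i - j| = 1` for indices. -/
def adjIdx {m : ℕ} (i j : Fin m) : Prop := i.1 + 1 = j.1 ∨ j.1 + 1 = i.1

/-- `|i - j| ≥ 2` for indices. -/
def farIdx {m : ℕ} (i j : Fin m) : Prop := i.1 + 2 ≤ j.1 ∨ j.1 + 2 ≤ i.1

theorem abs_le_coe {a : ℤ} {n : ℕ} (h0 : 0 ≤ a) (h : a ≤ (n : ℤ)) : |a| ≤ (n : ℤ) := by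
  rwa [abs_of_nonneg h0]

/-- The element `1` of `[±n]`. -/
def pmOne (n : ℕ) (hn : 2 ≤ n) : PM n :=
  ⟨1, one_ne_zero, abs_le_coe (by omega) (by omega)⟩

/-- The element `i` of `[±n]` attached to an index `i : Fin n` with `i ≥ 1`. -/
def pmA {n : ℕ} (i : Fin n) (h : 1 ≤ i.1) : PM n :=
  ⟨(i.1 : ℤ), by omega, abs_le_coe (by omega) (by have := i.isLt; omega)⟩

/-- The element `i + 1` of `[±n]` attached to an index `i : Fin n`. -/
def pmB {n : ℕ} (i : Fin n) : PM n :=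
  ⟨(i.1 : ℤ) + 1, by omega, abs_le_coe (by omega) (by have := i.isLt; omega)⟩

open FreeGroup in
/-- The relators of the Artin group `Bₙᴮ` of type B, with generators `σ₀, σ₁, …, σ_{n-1}`. -/
inductive BBRelator (n : ℕ) (hn : 2 ≤ n) : FreeGroup (Fin n) → Prop
  /-- (BB1) `σ₀σ₁σ₀σ₁ = σ₁σ₀σ₁σ₀`. -/
  | bb1 : BBRelator n hn
      (of ⟨0, by omega⟩ * of ⟨1, by omega⟩ * of ⟨0, by omega⟩ * of ⟨1, by omega⟩ *
        (of ⟨1, by omega⟩ * of ⟨0, by omega⟩ * of ⟨1, by omega⟩ * of ⟨0, by omega⟩)⁻¹)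
  /-- (BB2) `σᵢσⱼσᵢ = σⱼσᵢσⱼ` for `i, j ≥ 1` with `|i-j| = 1`. -/
  | bb2 (i j : Fin n) (hi : 1 ≤ i.1) (hj : 1 ≤ j.1) (h : adjIdx i j) :
      BBRelator n hn (of i * of j * of i * (of j * of i * of j)⁻¹)
  /-- (BB3) `σᵢσⱼ = σⱼσᵢ` for `|i-j| ≥ 2`. -/
  | bb3 (i j : Fin n) (h : farIdx i j) :
      BBRelator n hn (of i * of j * (of j * of i)⁻¹)

/-- The Artin (braid) group of type B. -/
abbrev BraidGroupB (n : ℕ) (hn : 2 ≤ n) := PresentedGroup {x | BBRelator n hn x}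

/-- Generators `s_i`, `s_i'` (formal inverses) and `θ_i`, `0 ≤ i ≤ n-1`, of the tied
monoid of type B. -/
inductive TBGen (n : ℕ) : Type
  | s (i : Fin n) : TBGen n
  | s' (i : Fin n) : TBGen n
  | θ (i : Fin n) : TBGen n

open FreeMonoid in
/-- The defining relations (BB0)–(BB3) and (TB1)–(TB9) of the tied monoid of type B. -/
inductive TBRel (n : ℕ) (hn : 2 ≤ n) : FreeMonoid (TBGen n) → FreeMonoid (TBGen n) → Prop
  /-- (BB0) `s_i s_i' = 1`. -/
  | BB0a (i : Fin n) : TBRel n hn (of (.s i) * of (.s' i)) 1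
  /-- (BB0) `s_i' s_i = 1`. -/
  | BB0b (i : Fin n) : TBRel n hn (of (.s' i) * of (.s i)) 1
  /-- (BB1) `s₀s₁s₀s₁ = s₁s₀s₁s₀`. -/
  | BB1 : TBRel n hn
      (of (.s ⟨0, by omega⟩) * of (.s ⟨1, by omega⟩) * of (.s ⟨0, by omega⟩) *
        of (.s ⟨1, by omega⟩))
      (of (.s ⟨1, by omega⟩) * of (.s ⟨0, by omega⟩) * of (.s ⟨1, by omega⟩) *
        of (.s ⟨0, by omega⟩))
  /-- (BB2) `sᵢsⱼsᵢ = sⱼsᵢsⱼ` for `i, j ≥ 1` with `|i-j| = 1`. -/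
  | BB2 (i j : Fin n) (hi : 1 ≤ i.1) (hj : 1 ≤ j.1) (h : adjIdx i j) :
      TBRel n hn (of (.s i) * of (.s j) * of (.s i)) (of (.s j) * of (.s i) * of (.s j))
  /-- (BB3) `sᵢsⱼ = sⱼsᵢ` for `|i-j| ≥ 2`. -/
  | BB3 (i j : Fin n) (h : farIdx i j) :
      TBRel n hn (of (.s i) * of (.s j)) (of (.s j) * of (.s i))
  /-- (TB1) `θᵢθᵢ = θᵢ`. -/
  | TB1 (i : Fin n) : TBRel n hn (of (.θ i) * of (.θ i)) (of (.θ i))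
  /-- (TB2) `θᵢθⱼ = θⱼθᵢ`. -/
  | TB2 (i j : Fin n) : TBRel n hn (of (.θ i) * of (.θ j)) (of (.θ j) * of (.θ i))
  /-- (TB3) `θ₀s₁s₀s₁ = s₁s₀s₁θ₀`. -/
  | TB3a : TBRel n hn
      (of (.θ ⟨0, by omega⟩) * of (.s ⟨1, by omega⟩) * of (.s ⟨0, by omega⟩) *
        of (.s ⟨1, by omega⟩))
      (of (.s ⟨1, by omega⟩) * of (.s ⟨0, by omega⟩) * of (.s ⟨1, by omega⟩) *
        of (.θ ⟨0, by omega⟩))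
  /-- (TB3) `θ₁s₀s₁s₀ = s₀s₁s₀θ₁`. -/
  | TB3b : TBRel n hn
      (of (.θ ⟨1, by omega⟩) * of (.s ⟨0, by omega⟩) * of (.s ⟨1, by omega⟩) *
        of (.s ⟨0, by omega⟩))
      (of (.s ⟨0, by omega⟩) * of (.s ⟨1, by omega⟩) * of (.s ⟨0, by omega⟩) *
        of (.θ ⟨1, by omega⟩))
  /-- (TB4) `sᵢsⱼθᵢ = θⱼsᵢsⱼ` for `i, j ≥ 1` with `|i-j| = 1`. -/
  | TB4 (i j : Fin n) (hi : 1 ≤ i.1) (hj : 1 ≤ j.1) (h : adjIdx i j) :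
      TBRel n hn (of (.s i) * of (.s j) * of (.θ i)) (of (.θ j) * of (.s i) * of (.s j))
  /-- (TB5) `sᵢθⱼ = θⱼsᵢ` for `|i-j| ≠ 1`. -/
  | TB5 (i j : Fin n) (h : ¬ adjIdx i j) :
      TBRel n hn (of (.s i) * of (.θ j)) (of (.θ j) * of (.s i))
  /-- (TB6) `θᵢθⱼsᵢ = θⱼsᵢθⱼ` for `|i-j| = 1`. -/
  | TB6a (i j : Fin n) (h : adjIdx i j) :
      TBRel n hn (of (.θ i) * of (.θ j) * of (.s i)) (of (.θ j) * of (.s i) * of (.θ j))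
  /-- (TB6) `θⱼsᵢθⱼ = sᵢθᵢθⱼ` for `|i-j| = 1`. -/
  | TB6b (i j : Fin n) (h : adjIdx i j) :
      TBRel n hn (of (.θ j) * of (.s i) * of (.θ j)) (of (.s i) * of (.θ i) * of (.θ j))
  /-- (TB7) `θ₁s₀θ₁s₀ = s₀θ₁s₀θ₁`. -/
  | TB7a : TBRel n hn
      (of (.θ ⟨1, by omega⟩) * of (.s ⟨0, by omega⟩) * of (.θ ⟨1, by omega⟩) *
        of (.s ⟨0, by omega⟩))
      (of (.s ⟨0, by omega⟩) * of (.θ ⟨1, by omega⟩) * of (.s ⟨0, by omega⟩) *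
        of (.θ ⟨1, by omega⟩))
  /-- (TB7) `θ₀s₁θ₀s₁ = s₁θ₀s₁θ₀`. -/
  | TB7b : TBRel n hn
      (of (.θ ⟨0, by omega⟩) * of (.s ⟨1, by omega⟩) * of (.θ ⟨0, by omega⟩) *
        of (.s ⟨1, by omega⟩))
      (of (.s ⟨1, by omega⟩) * of (.θ ⟨0, by omega⟩) * of (.s ⟨1, by omega⟩) *
        of (.θ ⟨0, by omega⟩))
  /-- (TB8) `s₁s₁θ₀ = θ₀s₁s₁`. -/
  | TB8a : TBRel n hn
      (of (.s ⟨1, by omega⟩) * of (.s ⟨1, by omega⟩) * of (.θ ⟨0, by omega⟩))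
      (of (.θ ⟨0, by omega⟩) * of (.s ⟨1, by omega⟩) * of (.s ⟨1, by omega⟩))
  /-- (TB8) `s₀s₀θ₁ = θ₁s₀s₀`. -/
  | TB8b : TBRel n hn
      (of (.s ⟨0, by omega⟩) * of (.s ⟨0, by omega⟩) * of (.θ ⟨1, by omega⟩))
      (of (.θ ⟨1, by omega⟩) * of (.s ⟨0, by omega⟩) * of (.s ⟨0, by omega⟩))
  /-- (TB9) `sᵢsⱼ'θᵢ = θⱼsᵢsⱼ'` for `i, j ≥ 1` with `|i-j| = 1`. -/
  | TB9 (i j : Fin n) (hi : 1 ≤ i.1) (hj : 1 ≤ j.1) (h : adjIdx i j) :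
      TBRel n hn (of (.s i) * of (.s' j) * of (.θ i)) (of (.θ j) * of (.s i) * of (.s' j))



section PartLattice

theorem isBPart_iff {n : ℕ} (I : Setoid (PM n)) : IsBPart I ↔
    IsSigned I ∧ ∀ x y : PM n, I x x.neg → I y y.neg → I x y := by
  unfold IsBPart
  refine and_congr_right fun hs => ?_
  have key : ∀ x : PM n, I x x.neg → IsZeroBlock I {z | I z x} := by
    intro x hx
    refine ⟨⟨x, rfl⟩, ?_⟩
    ext z
    simp only [negSet, Set.mem_image, Set.mem_ofPred_eq]
    constructor
    · rintro ⟨y, hy, rfl⟩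
      exact I.trans ((hs _ _).1 hy) (I.symm hx)
    · intro hz
      refine ⟨z.neg, ?_, PM.neg_neg z⟩
      exact I.trans ((hs _ _).1 hz) (I.symm hx)
  constructor
  · intro h x y hx hy
    have := h (key x hx) (key y hy)
    have h2 : x ∈ {z | I z x} := I.refl x
    rw [this] at h2
    exact h2
  · rintro h K ⟨⟨x, rfl⟩, hK⟩ L ⟨⟨y, rfl⟩, hL⟩
    have hx : I x x.neg := by
      have : x.neg ∈ {z | I z x} := by
        rw [← hK]; exact ⟨x, I.refl x, rfl⟩
      exact I.symm this
    have hy : I y y.neg := by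
      have : y.neg ∈ {z | I z y} := by
        rw [← hL]; exact ⟨y, I.refl y, rfl⟩
      exact I.symm this
    have hxy := h x y hx hy
    ext z
    exact ⟨fun hz => I.trans hz hxy, fun hz => I.trans hz (I.symm hxy)⟩

/-- The type of `B_n`-partitions. -/
def BP (n : ℕ) := {I : Setoid (PM n) // IsBPart I}

instance (n : ℕ) : PartialOrder (BP n) := inferInstanceAs (PartialOrder {I : Setoid (PM n) // IsBPart I})

instance (n : ℕ) : InfSet (BP n) :=
  ⟨fun S => ⟨sInf (Subtype.val '' S), by
    rw [isBPart_iff]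
    constructor
    · intro x y
      constructor
      · rintro h _ ⟨K, hK, rfl⟩
        exact (((isBPart_iff K.1).1 K.2).1 x y).1 (h K.1 ⟨K, hK, rfl⟩)
      · rintro h _ ⟨K, hK, rfl⟩
        exact (((isBPart_iff K.1).1 K.2).1 x y).2 (h K.1 ⟨K, hK, rfl⟩)
    · rintro x y hx hy _ ⟨K, hK, rfl⟩
      exact ((isBPart_iff K.1).1 K.2).2 x y (hx K.1 ⟨K, hK, rfl⟩) (hy K.1 ⟨K, hK, rfl⟩)⟩⟩

noncomputable instance (n : ℕ) : CompleteLattice (BP n) :=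
  completeLatticeOfInf (BP n) (fun S => by
    constructor
    · intro K hK
      exact sInf_le (α := Setoid (PM n)) ⟨K, hK, rfl⟩
    · intro K hK
      refine le_sInf (α := Setoid (PM n)) ?_
      rintro _ ⟨L, hL, rfl⟩
      exact hK hL)

theorem BP.le_def {n : ℕ} {I J : BP n} : I ≤ J ↔ ∀ x y, I.1 x y → J.1 x y := Iff.rfl

theorem bot_isBPart (n : ℕ) : IsBPart (⊥ : Setoid (PM n)) := by
  rw [isBPart_iff]
  constructor
  · intro x y
    constructor
    · intro h
      have h : x = y := h
      subst h; exact Setoid.refl' _ _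
    · intro h
      have h : x.neg = y.neg := h
      have : x = y := by rw [← PM.neg_neg x, h, PM.neg_neg]
      subst this; exact Setoid.refl' _ _
  · intro x y h
    have h : x = x.neg := h
    exfalso
    have := congrArg Subtype.val h
    simp only [PM.neg] at this
    have := x.2.1
    omega

theorem BP.bot_val (n : ℕ) : (⊥ : BP n).1 = ⊥ := by
  apply le_antisymm
  · have : (⊥ : BP n) ≤ ⟨⊥, bot_isBPart n⟩ := bot_le
    exact this
  · exact bot_le

theorem BP.signed {n : ℕ} (K : BP n) (x y : PM n) : K.1 x y ↔ K.1 x.neg y.neg :=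
  ((isBPart_iff K.1).1 K.2).1 x y

theorem BP.zero {n : ℕ} (K : BP n) (x y : PM n) (hx : K.1 x x.neg) (hy : K.1 y y.neg) : K.1 x y :=
  ((isBPart_iff K.1).1 K.2).2 x y hx hy

/-- Least `B_n`-partition joining `a` and `b` -/
noncomputable def BE {n : ℕ} (a b : ℤ) : BP n :=
  sInf {K | ∀ x y : PM n, x.1 = a → y.1 = b → K.1 x y}

theorem BE_le {n : ℕ} (x y : PM n) (K : BP n) : BE x.1 y.1 ≤ K ↔ K.1 x y := by
  constructor
  · intro h
    have h0 : (BE x.1 y.1 : BP n).1 x y := by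
      rintro _ ⟨L, hL, rfl⟩
      exact hL x y rfl rfl
    exact h h0
  · intro h
    apply sInf_le
    intro x' y' hx hy
    have hx : x' = x := Subtype.ext hx
    have hy : y' = y := Subtype.ext hy
    subst hx hy
    exact h

theorem BE_le_iff {n : ℕ} {a b : ℤ} (ha : a ≠ 0 ∧ |a| ≤ (n : ℤ)) (hb : b ≠ 0 ∧ |b| ≤ (n : ℤ)) (K : BP n) :
    BE a b ≤ K ↔ K.1 ⟨a, ha⟩ ⟨b, hb⟩ := BE_le ⟨a, ha⟩ ⟨b, hb⟩ K

theorem BE_symm {n : ℕ} (a b : ℤ) : (BE a b : BP n) = BE b a := by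
  unfold BE
  congr 1
  ext K
  exact ⟨fun h x y hx hy => K.1.symm (h y x hy hx), fun h x y hx hy => K.1.symm (h y x hy hx)⟩

theorem BE_neg {n : ℕ} (a b : ℤ) : (BE (-a) (-b) : BP n) = BE a b := by
  unfold BE
  congr 1
  ext K
  constructor
  · intro h x y hx hy
    exact (K.signed _ _).2 (h x.neg y.neg (by simp [PM.neg, hx]) (by simp [PM.neg, hy]))
  · intro h x y hx hy
    exact (K.signed _ _).2 (h x.neg y.neg (by simp [PM.neg, hx]) (by simp [PM.neg, hy]))

/-- signed permutations -/
def WB (n : ℕ) : Subgroup (Equiv.Perm (PM n)) where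
  carrier := {w | ∀ x, w x.neg = (w x).neg}
  mul_mem' := by
    intro a b ha hb x
    simp only [Set.mem_ofPred_eq] at ha hb
    simp [Equiv.Perm.mul_apply, hb, ha]
  one_mem' := fun x => rfl
  inv_mem' := by
    intro a ha x
    simp only [Set.mem_ofPred_eq] at ha
    rw [Equiv.Perm.inv_eq_iff_eq, ha]
    simp

theorem WB.neg {n : ℕ} (w : WB n) (x : PM n) : w.1 x.neg = (w.1 x).neg := w.2 x

/-- transport -/
def BPact0 {n : ℕ} (w : WB n) (I : BP n) : BP n :=
  ⟨permAct w.1 I.1, by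
    rw [isBPart_iff]
    have hw : ∀ x, w.1.symm x.neg = (w.1.symm x).neg := fun x => (w⁻¹).2 x
    refine ⟨fun x y => ?_, fun x y hx hy => ?_⟩
    · show I.1 _ _ ↔ I.1 _ _
      rw [hw, hw]; exact I.signed _ _
    · change I.1 _ _ at hx
      change I.1 _ _ at hy
      rw [hw] at hx hy
      exact I.zero _ _ hx hy⟩

theorem BPact0_apply {n : ℕ} (w : WB n) (I : BP n) (x y : PM n) :
    (BPact0 w I).1 (w.1 x) (w.1 y) ↔ I.1 x y := by
  show I.1 _ _ ↔ _
  simp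

theorem BPact0_mul {n : ℕ} (v w : WB n) (I : BP n) : BPact0 (v * w) I = BPact0 v (BPact0 w I) := rfl

theorem BPact0_one {n : ℕ} (I : BP n) : BPact0 1 I = I := rfl

theorem BPact0_mono {n : ℕ} (w : WB n) {I J : BP n} (h : I ≤ J) : BPact0 w I ≤ BPact0 w J :=
  fun _ _ hxy => h hxy

/-- transport as order isomorphism -/
def BPact {n : ℕ} (w : WB n) : BP n ≃o BP n where
  toFun := BPact0 w
  invFun := BPact0 w⁻¹
  left_inv I := by rw [← BPact0_mul, inv_mul_cancel, BPact0_one]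
  right_inv I := by rw [← BPact0_mul, mul_inv_cancel, BPact0_one]
  map_rel_iff' := by
    intro I J
    constructor
    · intro h
      have := BPact0_mono w⁻¹ h
      simpa [← BPact0_mul, BPact0_one] using this
    · exact BPact0_mono w

theorem BPact_mul {n : ℕ} (v w : WB n) (I : BP n) : BPact (v * w) I = BPact v (BPact w I) := rfl

theorem BPact_one {n : ℕ} (I : BP n) : BPact 1 I = I := rfl

theorem BPact_BE {n : ℕ} (w : WB n) (x y : PM n) :
    BPact w (BE x.1 y.1) = BE (w.1 x).1 (w.1 y).1 := by
  apply eq_of_forall_ge_iff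
  intro K
  rw [← OrderIso.le_symm_apply, BE_le, BE_le]
  rfl

/-- The semidirect product -/
@[ext]
structure SD (n : ℕ) {H : Type*} [Group H] (ρ : H →* WB n) where
  fst : BP n
  snd : H

noncomputable instance {n : ℕ} {H : Type*} [Group H] (ρ : H →* WB n) : Monoid (SD n ρ) where
  mul x y := ⟨x.fst ⊔ BPact (ρ x.snd) y.fst, x.snd * y.snd⟩
  one := ⟨⊥, 1⟩
  mul_assoc x y z := by
    refine SD.ext ?_ (mul_assoc _ _ _)
    show (x.fst ⊔ BPact (ρ x.snd) y.fst) ⊔ BPact (ρ (x.snd * y.snd)) z.fst =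
      x.fst ⊔ BPact (ρ x.snd) (y.fst ⊔ BPact (ρ y.snd) z.fst)
    rw [OrderIso.map_sup, map_mul, BPact_mul, sup_assoc]
  one_mul x := by
    refine SD.ext ?_ (one_mul _)
    show ⊥ ⊔ BPact (ρ 1) x.fst = x.fst
    rw [map_one, BPact_one, bot_sup_eq]
  mul_one x := by
    refine SD.ext ?_ (mul_one _)
    show x.fst ⊔ BPact (ρ x.snd) ⊥ = x.fst
    rw [OrderIso.map_bot, sup_bot_eq]

section
variable {n : ℕ} {H : Type*} [Group H] (ρ : H →* WB n)
theorem SD.mul_fst (x y : SD n ρ) : (x * y).fst = x.fst ⊔ BPact (ρ x.snd) y.fst := rfl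
theorem SD.mul_snd (x y : SD n ρ) : (x * y).snd = x.snd * y.snd := rfl
theorem SD.one_fst : (1 : SD n ρ).fst = ⊥ := rfl
theorem SD.one_snd : (1 : SD n ρ).snd = 1 := rfl
theorem SD.mk_mul (I J : BP n) (g h : H) :
    (⟨I, g⟩ * ⟨J, h⟩ : SD n ρ) = ⟨I ⊔ BPact (ρ g) J, g * h⟩ := rfl
theorem SD.one_def : (1 : SD n ρ) = ⟨⊥, 1⟩ := rfl
end

end PartLattice

section Eps

theorem mu_le_iff {α : Type*} (a b : α) (K : Setoid α) : mu a b ≤ K ↔ K a b := by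
  unfold mu muSet
  constructor
  · intro h
    exact h (Relation.EqvGen.rel a b ⟨by simp, by simp⟩)
  · intro h x y hxy
    change Relation.EqvGen _ x y at hxy
    induction hxy with
    | rel x y hxy =>
      obtain ⟨hx, hy⟩ := hxy
      simp only [Set.mem_insert_iff, Set.mem_singleton_iff] at hx hy
      rcases hx with rfl | rfl <;> rcases hy with rfl | rfl
      · exact K.refl _
      · exact h
      · exact K.symm h
      · exact K.refl _
    | refl x => exact K.refl _
    | symm x y _ ih => exact K.symm ih
    | trans x y z _ _ h1 h2 => exact K.trans h1 h2

theorem eps_le_iff {n : ℕ} (a b : PM n) (K : Setoid (PM n)) :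
    eps a b ≤ K ↔ K a b ∧ K a.neg b.neg := by
  unfold eps
  rw [sup_le_iff, mu_le_iff, mu_le_iff]
  exact ⟨fun h => ⟨h.2, K.symm h.1⟩, fun h => ⟨K.symm h.2, h.1⟩⟩

theorem PM.neg_val {n : ℕ} (x : PM n) : x.neg.1 = -x.1 := rfl

theorem eps_isBPart {n : ℕ} (a b : PM n) (hab : a ≠ b) : IsBPart (eps a b) := by
  rw [isBPart_iff]
  have h0 := (eps_le_iff a b (eps a b)).1 le_rfl
  have hs : ∀ x y : PM n, eps a b x y → eps a b x.neg y.neg := by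
    have : eps a b ≤ Setoid.comap PM.neg (eps a b) := by
      rw [eps_le_iff]
      refine ⟨h0.2, ?_⟩
      show eps a b a.neg.neg b.neg.neg
      simpa using h0.1
    intro x y h
    exact this h
  refine ⟨fun x y => ⟨hs x y, fun h => by simpa using hs _ _ h⟩, ?_⟩
  have hab' : a.1 ≠ b.1 := fun h => hab (Subtype.ext h)
  by_cases hz : b.1 = - a.1
  · have hb : b = a.neg := Subtype.ext hz
    have : ∀ x : PM n, eps a b x x.neg → x = a ∨ x = a.neg := by
      intro x hx
      have h1 : eps a b ≤ Setoid.ker (fun x : PM n => if x.1 = a.1 ∨ x.1 = -a.1 then a.1 else x.1) := by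
        rw [eps_le_iff]
        simp only [Setoid.ker_def, PM.neg_val, hz]
        simp
      have h2 := h1 hx
      simp only [Setoid.ker_def, PM.neg_val] at h2
      have := x.2.1
      simp only [Subtype.ext_iff, PM.neg_val]
      split_ifs at h2 <;> omega
    subst hb
    intro x y hx hy
    rcases this x hx with rfl | rfl <;> rcases this y hy with rfl | rfl
    · exact (eps _ _).refl _
    · exact h0.1
    · exact (eps _ _).symm h0.1
    · exact (eps _ _).refl _
  · intro x y hx
    exfalso
    have h1 : eps a b ≤ Setoid.ker (fun x : PM n => if x.1 = b.1 then a.1 else if x.1 = -b.1 then -a.1 else x.1) := by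
      rw [eps_le_iff]
      simp only [Setoid.ker_def, PM.neg_val]
      constructor
      · split_ifs <;> omega
      · split_ifs <;> omega
    have h2 := h1 hx
    simp only [Setoid.ker_def, PM.neg_val] at h2
    have := x.2.1
    have := a.2.1
    split_ifs at h2 <;> omega

theorem BE_eq_eps {n : ℕ} (a b : PM n) (hab : a ≠ b) : (BE a.1 b.1 : BP n).1 = eps a b := by
  apply le_antisymm
  · exact (BE_le a b (⟨eps a b, eps_isBPart a b hab⟩ : BP n)).2
      ((eps_le_iff a b (eps a b)).1 le_rfl).1
  · rw [eps_le_iff]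
    have : (BE a.1 b.1 : BP n).1 a b := (BE_le a b _).1 le_rfl
    exact ⟨this, (BP.signed _ _ _).1 this⟩

end Eps


section Forward

/-- the action of the `k`-th generator on integers -/
def tt (k : ℕ) (a : ℤ) : ℤ :=
  if k = 0 then (if a = 1 then -1 else if a = -1 then 1 else a)
  else if a = k then k + 1 else if a = k + 1 then k
  else if a = -k then -(k + 1) else if a = -(k + 1) then -k else a

theorem tt_spec (k : ℕ) (a : ℤ) : (k = 0 ∧ a = 1 ∧ tt k a = -1) ∨ (k = 0 ∧ a = -1 ∧ tt k a = 1) ∨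
    (k = 0 ∧ a ≠ 1 ∧ a ≠ -1 ∧ tt k a = a) ∨ (k ≠ 0 ∧ a = k ∧ tt k a = k + 1) ∨
    (k ≠ 0 ∧ a = k + 1 ∧ tt k a = k) ∨ (k ≠ 0 ∧ a = -k ∧ tt k a = -(k + 1)) ∨
    (k ≠ 0 ∧ a = -(k + 1) ∧ tt k a = -k) ∨
    (k ≠ 0 ∧ a ≠ k ∧ a ≠ k + 1 ∧ a ≠ -k ∧ a ≠ -(k + 1) ∧ tt k a = a) := by
  unfold tt; split_ifs <;> omega

theorem tt_tt (k : ℕ) (a : ℤ) : tt k (tt k a) = a := by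
  have h1 := tt_spec k a
  have h2 := tt_spec k (tt k a)
  omega

theorem tt_neg (k : ℕ) (a : ℤ) : tt k (-a) = -tt k a := by
  unfold tt; split_ifs <;> omega

/-- in range -/
def InR (n : ℕ) (a : ℤ) : Prop := a ≠ 0 ∧ -(n : ℤ) ≤ a ∧ a ≤ n

theorem InR.pm {n : ℕ} {a : ℤ} (h : InR n a) : a ≠ 0 ∧ |a| ≤ (n : ℤ) :=
  ⟨h.1, abs_le.2 h.2⟩

theorem PM.inR {n : ℕ} (x : PM n) : InR n x.1 := ⟨x.2.1, abs_le.1 x.2.2⟩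

theorem InR.tt {n : ℕ} {a : ℤ} (h : InR n a) {k : ℕ} (hk : k < n) : InR n (tt k a) := by
  unfold InR _root_.tt at *
  split_ifs <;> omega

theorem InR.neg {n : ℕ} {a : ℤ} (h : InR n a) : InR n (-a) := by
  unfold InR at *; omega

theorem BE_trans {n : ℕ} {a b c : ℤ} (ha : InR n a) (hb : InR n b) (hc : InR n c) {K : BP n}
    (h1 : BE a b ≤ K) (h2 : BE b c ≤ K) : BE a c ≤ K := by
  rw [BE_le_iff ha.pm hb.pm] at h1
  rw [BE_le_iff hb.pm hc.pm] at h2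
  rw [BE_le_iff ha.pm hc.pm]
  exact K.1.trans h1 h2

theorem BE_zero {n : ℕ} {a b : ℤ} (ha : InR n a) (hb : InR n b) {K : BP n}
    (h1 : BE a (-a) ≤ K) (h2 : BE b (-b) ≤ K) : BE a b ≤ K := by
  rw [BE_le_iff ha.pm ha.neg.pm] at h1
  rw [BE_le_iff hb.pm hb.neg.pm] at h2
  rw [BE_le_iff ha.pm hb.pm]
  exact K.zero _ _ h1 h2

theorem BE_sym {n : ℕ} {a b : ℤ} {K : BP n} (h1 : BE a b ≤ K) : BE b a ≤ K := by
  rwa [BE_symm]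

theorem BE_ng {n : ℕ} {a b : ℤ} {K : BP n} (h1 : BE a b ≤ K) : BE (-a) (-b) ≤ K := by
  rwa [BE_neg]

/-- `ρ` acts on generators as expected. -/
def RhoOK {n : ℕ} {hn : 2 ≤ n} (ρ : BraidGroupB n hn →* WB n) : Prop :=
  ∀ (i : Fin n) (x : PM n), ((ρ (PresentedGroup.of i)).1 x).1 = tt i.1 x.1

variable {n : ℕ} {hn : 2 ≤ n} {ρ : BraidGroupB n hn →* WB n}

theorem RhoOK.BE (hρ : RhoOK ρ) (i : Fin n) {a b : ℤ} (ha : InR n a) (hb : InR n b) :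
    BPact (ρ (PresentedGroup.of i)) (BE a b) = BE (tt i.1 a) (tt i.1 b) := by
  have := BPact_BE (ρ (PresentedGroup.of i)) ⟨a, ha.pm⟩ ⟨b, hb.pm⟩
  rw [hρ, hρ] at this
  exact this

theorem RhoOK.inv (hρ : RhoOK ρ) (i : Fin n) :
    ρ (PresentedGroup.of i)⁻¹ = ρ (PresentedGroup.of i) := by
  rw [map_inv]
  apply inv_eq_of_mul_eq_one_left
  apply Subtype.ext
  apply Equiv.ext
  intro x
  apply Subtype.ext
  show ((ρ (PresentedGroup.of i)).1 ((ρ (PresentedGroup.of i)).1 x)).1 = x.1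
  rw [hρ, hρ, tt_tt]

/-- lower endpoint -/
def lo (i : ℕ) : ℤ := if i = 0 then -1 else i

theorem lo_spec (i : ℕ) : (i = 0 ∧ lo i = -1) ∨ (i ≠ 0 ∧ lo i = i) := by
  unfold lo; split_ifs <;> omega

theorem lo_inR {n : ℕ} (i : Fin n) : InR n (lo i.1) := by
  have := i.2
  unfold lo InR; split_ifs <;> omega

theorem hi_inR {n : ℕ} (i : Fin n) : InR n (i.1 + 1 : ℤ) := by
  have := i.2
  unfold InR; omega

variable (ρ) in
/-- images of generators -/
noncomputable def fwdGen : TBGen n → SD n ρ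
  | .s i => ⟨⊥, PresentedGroup.of i⟩
  | .s' i => ⟨⊥, (PresentedGroup.of i)⁻¹⟩
  | .θ i => ⟨BE (lo i.1) (i.1 + 1), 1⟩

theorem braid_bb1 : (PresentedGroup.of ⟨0, by omega⟩ * PresentedGroup.of ⟨1, by omega⟩ *
    PresentedGroup.of ⟨0, by omega⟩ * PresentedGroup.of ⟨1, by omega⟩ : BraidGroupB n hn) =
    PresentedGroup.of ⟨1, by omega⟩ * PresentedGroup.of ⟨0, by omega⟩ *
    PresentedGroup.of ⟨1, by omega⟩ * PresentedGroup.of ⟨0, by omega⟩ :=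
  PresentedGroup.mk_eq_mk_of_mul_inv_mem BBRelator.bb1

theorem braid_bb2 (i j : Fin n) (hi : 1 ≤ i.1) (hj : 1 ≤ j.1) (h : adjIdx i j) :
    (PresentedGroup.of i * PresentedGroup.of j * PresentedGroup.of i : BraidGroupB n hn) =
    PresentedGroup.of j * PresentedGroup.of i * PresentedGroup.of j :=
  PresentedGroup.mk_eq_mk_of_mul_inv_mem (BBRelator.bb2 i j hi hj h)

theorem braid_bb3 (i j : Fin n) (h : farIdx i j) :
    (PresentedGroup.of i * PresentedGroup.of j : BraidGroupB n hn) =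
    PresentedGroup.of j * PresentedGroup.of i :=
  PresentedGroup.mk_eq_mk_of_mul_inv_mem (BBRelator.bb3 i j h)

theorem BE_tri {n : ℕ} {a b c : ℤ} (ha : InR n a) (hb : InR n b) (hc : InR n c) :
    (BE a b ⊔ BE b c : BP n) = BE b c ⊔ BE a c := by
  apply eq_of_forall_ge_iff
  intro K
  simp only [sup_le_iff]
  exact ⟨fun h => ⟨h.2, BE_trans ha hb hc h.1 h.2⟩,
    fun h => ⟨BE_trans ha hc hb h.2 (BE_sym h.1), h.1⟩⟩

theorem BE_zz {n : ℕ} (h2 : 2 ≤ n) :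
    (BE 1 2 ⊔ BE (-1) 1 : BP n) = BE (-1) 1 ⊔ BE (-2) 2 := by
  have r1 : InR n 1 := by unfold InR; omega
  have r2 : InR n 2 := by unfold InR; omega
  apply eq_of_forall_ge_iff
  intro K
  simp only [sup_le_iff]
  constructor
  · rintro ⟨h, h'⟩
    refine ⟨h', ?_⟩
    exact BE_trans r2.neg r1 r2 (BE_trans r2.neg r1.neg r1 (BE_sym (BE_ng h)) h') h
  · rintro ⟨h, h'⟩
    exact ⟨BE_zero r1 r2 (BE_sym h) (BE_sym h'), h⟩

theorem BE_zp {n : ℕ} (h2 : 2 ≤ n) :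
    (BE (-1) 1 ⊔ BE 1 2 : BP n) = BE 1 2 ⊔ BE (-1) 2 := by
  have r1 : InR n 1 := by unfold InR; omega
  have r2 : InR n 2 := by unfold InR; omega
  exact BE_tri r1.neg r1 r2

theorem fwd_tb6 (hρ : RhoOK ρ) (i j : Fin n) (h : adjIdx i j) :
    (BE (lo i.1) (i.1 + 1) ⊔ BE (lo j.1) (j.1 + 1) : BP n) =
    BE (lo j.1) (j.1 + 1) ⊔ BPact (ρ (PresentedGroup.of i)) (BE (lo j.1) (j.1 + 1)) := by
  have l0 : lo 0 = -1 := by simp [lo]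
  have l1 : lo 1 = 1 := by simp [lo]
  have a11 : tt 1 1 = 2 := by decide
  have a11' : tt 1 (-1) = -2 := by decide
  rw [hρ.BE _ (lo_inR _) (hi_inR _)]
  unfold adjIdx at h
  rcases h with h | h
  · have e1 : tt i.1 (lo j.1) = lo i.1 := by
      unfold tt lo; split_ifs <;> omega
    have e2 : tt i.1 (j.1 + 1) = j.1 + 1 := by
      unfold tt; split_ifs <;> omega
    have e3 : lo j.1 = i.1 + 1 := by unfold lo; split_ifs <;> omega
    rw [e1, e2, e3]
    exact BE_tri (lo_inR _) (hi_inR _) (hi_inR _)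
  · by_cases hj : j.1 = 0
    · have hi : i.1 = 1 := by omega
      rw [hi, hj, l0, l1]
      norm_num
      rw [a11, a11']
      exact BE_zz hn
    · have e1 : tt i.1 (lo j.1) = j.1 := by
        unfold tt lo; split_ifs <;> omega
      have e2 : tt i.1 (j.1 + 1) = i.1 + 1 := by
        unfold tt; split_ifs <;> omega
      have e3 : lo i.1 = j.1 + 1 := by unfold lo; split_ifs <;> omega
      have e4 : lo j.1 = j.1 := by unfold lo; split_ifs <;> omega
      have r4 := lo_inR j
      rw [e4] at r4
      rw [e1, e2, e3, e4, sup_comm]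
      rw [BE_tri r4 (hi_inR j) (hi_inR i), BE_symm (j.1 : ℤ) (j.1 + 1),
        BE_tri (hi_inR j) r4 (hi_inR i), sup_comm]

theorem fwd_tb4 (hρ : RhoOK ρ) (i j : Fin n) (hi : 1 ≤ i.1) (hj : 1 ≤ j.1) (h : adjIdx i j) :
    BPact (ρ (PresentedGroup.of i)) (BPact (ρ (PresentedGroup.of j)) (BE (lo i.1) (i.1 + 1))) =
    BE (lo j.1) (j.1 + 1) := by
  have rk : ∀ i : Fin n, ∀ {a : ℤ}, InR n a → InR n (tt i.1 a) := fun i a ha => ha.tt i.2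
  have lp : ∀ i : ℕ, 1 ≤ i → lo i = i := by
    intro i hi; unfold lo; split_ifs <;> omega
  rw [hρ.BE _ (lo_inR _) (hi_inR _), hρ.BE _ (rk _ (lo_inR _)) (rk _ (hi_inR _))]
  rw [lp _ hi, lp _ hj]
  unfold adjIdx at h
  have h1 := tt_spec j.1 i.1
  have h2 := tt_spec i.1 (tt j.1 i.1)
  have h3 := tt_spec j.1 (i.1 + 1)
  have h4 := tt_spec i.1 (tt j.1 (i.1 + 1))
  have e1 : tt i.1 (tt j.1 i.1) = j.1 := by omega
  have e2 : tt i.1 (tt j.1 (i.1 + 1)) = j.1 + 1 := by omega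
  rw [e1, e2]

set_option linter.unusedSimpArgs false in
theorem fwd_rel (hρ : RhoOK ρ) (a b : FreeMonoid (TBGen n)) (h : TBRel n hn a b) :
    FreeMonoid.lift (fwdGen ρ) a = FreeMonoid.lift (fwdGen ρ) b := by
  have r1 : InR n 1 := by unfold InR; omega
  have r1' : InR n (-1) := by unfold InR; omega
  have r2 : InR n 2 := by unfold InR; omega
  have r2' : InR n (-2) := by unfold InR; omega
  have rk : ∀ i : Fin n, ∀ {a : ℤ}, InR n a → InR n (tt i.1 a) := fun i a ha => ha.tt i.2
  have l0 : lo 0 = -1 := by simp [lo]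
  have l1 : lo 1 = 1 := by simp [lo]
  have a01 : tt 0 1 = -1 := by decide
  have a01' : tt 0 (-1) = 1 := by decide
  have a02 : tt 0 2 = 2 := by decide
  have a02' : tt 0 (-2) = -2 := by decide
  have a11 : tt 1 1 = 2 := by decide
  have a11' : tt 1 (-1) = -2 := by decide
  have a12 : tt 1 2 = 1 := by decide
  have a12' : tt 1 (-2) = -1 := by decide
  have lp : ∀ i : ℕ, 1 ≤ i → lo i = i := by
    intro i hi; unfold lo; split_ifs <;> omega
  cases h <;> simp only [map_mul, map_one, FreeMonoid.lift_eval_of, fwdGen, SD.mk_mul, SD.one_def,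
    OrderIso.map_bot, sup_bot_eq, bot_sup_eq, BPact_mul, BPact_one, mul_one, one_mul, hρ.inv,
    OrderIso.map_sup, mul_inv_cancel, inv_mul_cancel, sup_idem, SD.mk.injEq, true_and, and_true,
    l0, l1, Nat.cast_zero, Nat.cast_one, zero_add]
  case BB1 => exact braid_bb1
  case BB2 i j hi hj h => exact braid_bb2 i j hi hj h
  case BB3 i j h => exact braid_bb3 i j h
  case TB2 i j => exact sup_comm _ _
  case TB3a =>
    simp only [hρ.BE, a01, a01', a02, a02', a11, a11', a12, a12', r1, r1', r2, r2']
  case TB3b =>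
    norm_num
    simp only [hρ.BE, a01, a01', a02, a02', a11, a11', a12, a12', r1, r1', r2, r2']
    rw [← BE_neg, BE_symm]
  case TB4 i j hi hj h => exact fwd_tb4 hρ i j hi hj h
  case TB9 i j hi hj h => exact fwd_tb4 hρ i j hi hj h
  case TB5 i j h =>
    rw [hρ.BE _ (lo_inR _) (hi_inR _)]
    unfold adjIdx at h
    have h1 := tt_spec i.1 (lo j.1)
    have h2 := tt_spec i.1 (j.1 + 1)
    have h3 := lo_spec j.1
    by_cases hij : i.1 = j.1
    · have e1 : tt i.1 (lo j.1) = j.1 + 1 := by omega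
      have e2 : tt i.1 (j.1 + 1) = lo j.1 := by omega
      rw [e1, e2, BE_symm]
    · have e1 : tt i.1 (lo j.1) = lo j.1 := by omega
      have e2 : tt i.1 (j.1 + 1) = j.1 + 1 := by omega
      rw [e1, e2]
  case TB6a i j h => exact fwd_tb6 hρ i j h
  case TB6b i j h =>
    have h6 := congrArg (BPact (ρ (PresentedGroup.of i))) (fwd_tb6 hρ i j h)
    simp only [OrderIso.map_sup] at h6
    have hh : ρ (PresentedGroup.of i) * ρ (PresentedGroup.of i) = 1 := by
      nth_rewrite 1 [← hρ.inv]
      rw [← map_mul, inv_mul_cancel, map_one]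
    rw [h6, ← BPact_mul, hh, BPact_one, sup_comm]
  case TB7a =>
    norm_num
    simp only [hρ.BE, a01, a01', a02, a02', a11, a11', a12, a12', r1, r1', r2, r2']
    exact sup_comm _ _
  case TB7b =>
    simp only [hρ.BE, a01, a01', a02, a02', a11, a11', a12, a12', r1, r1', r2, r2']
    exact sup_comm _ _
  case TB8a =>
    simp only [hρ.BE, a01, a01', a02, a02', a11, a11', a12, a12', r1, r1', r2, r2']
  case TB8b =>
    norm_num
    simp only [hρ.BE, a01, a01', a02, a02', a11, a11', a12, a12', r1, r1', r2, r2']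

end Forward


section Transitive

/-- reflection swapping `i` and `j` -/
def rr (i j : ℤ) (a : ℤ) : ℤ :=
  if a = i then j else if a = j then i else if a = -i then -j else if a = -j then -i else a

theorem rr_spec (i j a : ℤ) : (a = i ∧ rr i j a = j) ∨ (a ≠ i ∧ a = j ∧ rr i j a = i) ∨
    (a ≠ i ∧ a ≠ j ∧ a = -i ∧ rr i j a = -j) ∨ (a ≠ i ∧ a ≠ j ∧ a ≠ -i ∧ a = -j ∧ rr i j a = -i) ∨
    (a ≠ i ∧ a ≠ j ∧ a ≠ -i ∧ a ≠ -j ∧ rr i j a = a) := by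
  unfold rr; split_ifs <;> omega

/-- sign change of `i` -/
def fl (i : ℤ) (a : ℤ) : ℤ := if a = i ∨ a = -i then -a else a

theorem fl_spec (i a : ℤ) : ((a = i ∨ a = -i) ∧ fl i a = -a) ∨ (a ≠ i ∧ a ≠ -i ∧ fl i a = a) := by
  unfold fl; split_ifs <;> omega

variable {n : ℕ} {hn : 2 ≤ n} {ρ : BraidGroupB n hn →* WB n}

theorem exists_rr (hρ : RhoOK ρ) (i j : ℕ) (hi : 1 ≤ i) (hij : i + 1 ≤ j) (hj : j ≤ n) :
    ∃ g, ∀ x : PM n, ((ρ g).1 x).1 = rr i j x.1 := by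
  induction j, hij using Nat.le_induction with
  | base =>
    refine ⟨PresentedGroup.of ⟨i, by omega⟩, fun x => ?_⟩
    rw [hρ]
    have h1 := tt_spec i x.1
    have h2 := rr_spec i (i + 1 : ℕ) x.1
    dsimp only
    omega
  | succ j hij ih =>
    obtain ⟨g, hg⟩ := ih (by omega)
    refine ⟨PresentedGroup.of ⟨j, by omega⟩ * g * PresentedGroup.of ⟨j, by omega⟩, fun x => ?_⟩
    rw [map_mul, map_mul]
    show ((ρ _).1 ((ρ g).1 ((ρ _).1 x))).1 = _
    rw [hρ, hg, hρ]
    dsimp only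
    have h1 := tt_spec j x.1
    have h2 := rr_spec i j (tt j x.1)
    have h3 := tt_spec j (rr i j (tt j x.1))
    have h4 := rr_spec i (j + 1 : ℕ) x.1
    have := x.2.1
    omega

theorem exists_fl (hρ : RhoOK ρ) (i : ℕ) (hi : 1 ≤ i) (hin : i ≤ n) :
    ∃ g, ∀ x : PM n, ((ρ g).1 x).1 = fl i x.1 := by
  by_cases h : i = 1
  · refine ⟨PresentedGroup.of ⟨0, by omega⟩, fun x => ?_⟩
    rw [hρ]
    dsimp only
    have h1 := tt_spec 0 x.1
    have h2 := fl_spec i x.1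
    omega
  · obtain ⟨r, hr⟩ := exists_rr hρ 1 i le_rfl (by omega) hin
    refine ⟨r * PresentedGroup.of ⟨0, by omega⟩ * r, fun x => ?_⟩
    rw [map_mul, map_mul]
    show ((ρ r).1 ((ρ _).1 ((ρ r).1 x))).1 = _
    rw [hr, hρ, hr]
    dsimp only
    have h1 := rr_spec (1 : ℕ) i x.1
    have h2 := tt_spec 0 (rr (1 : ℕ) i x.1)
    have h3 := rr_spec (1 : ℕ) i (tt 0 (rr (1 : ℕ) i x.1))
    have h4 := fl_spec i x.1
    omega

theorem exists_move_abs (hρ : RhoOK ρ) (x y : PM n) : ∃ g,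
    (((ρ g).1 x).1 = y.1 ∨ ((ρ g).1 x).1 = -y.1) ∧ ∀ z : PM n, z.1 ≠ x.1 → z.1 ≠ -x.1 → z.1 ≠ y.1 → z.1 ≠ -y.1 →
      (ρ g).1 z = z := by
  obtain ⟨hx0, hx1, hx2⟩ := x.inR
  obtain ⟨hy0, hy1, hy2⟩ := y.inR
  obtain ⟨i, hi⟩ : ∃ i : ℕ, i = x.1.natAbs := ⟨_, rfl⟩
  obtain ⟨j, hj⟩ : ∃ i : ℕ, i = y.1.natAbs := ⟨_, rfl⟩
  rcases lt_trichotomy i j with h | h | h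
  · obtain ⟨g, hg⟩ := exists_rr hρ i j (by omega) (by omega) (by omega)
    refine ⟨g, ?_, fun z h1 h2 h3 h4 => Subtype.ext ?_⟩
    · rw [hg]
      have := rr_spec i j x.1
      omega
    · rw [hg]
      have := rr_spec i j z.1
      omega
  · refine ⟨1, ?_, fun z _ _ _ _ => by simp⟩
    rw [map_one]
    show x.1 = _ ∨ x.1 = _
    omega
  · obtain ⟨g, hg⟩ := exists_rr hρ j i (by omega) (by omega) (by omega)
    refine ⟨g, ?_, fun z h1 h2 h3 h4 => Subtype.ext ?_⟩
    · rw [hg]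
      have := rr_spec j i x.1
      omega
    · rw [hg]
      have := rr_spec j i z.1
      omega

theorem exists_move (hρ : RhoOK ρ) (x y : PM n) : ∃ g,
    (ρ g).1 x = y ∧ ∀ z : PM n, z.1 ≠ x.1 → z.1 ≠ -x.1 → z.1 ≠ y.1 → z.1 ≠ -y.1 →
      (ρ g).1 z = z := by
  obtain ⟨g, h1 | h1, h2⟩ := exists_move_abs hρ x y
  · exact ⟨g, Subtype.ext h1, h2⟩
  · obtain ⟨hy0, hy1, hy2⟩ := y.inR
    obtain ⟨f, hf⟩ := exists_fl hρ y.1.natAbs (by omega) (by omega)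
    refine ⟨f * g, Subtype.ext ?_, fun z a b c d => Subtype.ext ?_⟩
    · rw [map_mul]
      show ((ρ f).1 ((ρ g).1 x)).1 = _
      rw [hf, h1]
      have := fl_spec y.1.natAbs (-y.1)
      omega
    · rw [map_mul]
      show ((ρ f).1 ((ρ g).1 z)).1 = _
      rw [h2 z a b c d, hf]
      have := fl_spec y.1.natAbs z.1
      omega

theorem rho_eq_or_neg (w : WB n) (x y : PM n) (h : (w.1 x).1 = (w.1 y).1 ∨ (w.1 x).1 = -(w.1 y).1) :
    x.1 = y.1 ∨ x.1 = -y.1 := by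
  rcases h with h | h
  · left
    exact congrArg Subtype.val (w.1.injective (Subtype.ext h))
  · right
    have : w.1 x = w.1 y.neg := by
      rw [WB.neg]; exact Subtype.ext h
    exact congrArg Subtype.val (w.1.injective this)

theorem exists_tuple (hρ : RhoOK ρ) (f : ℕ → PM n) (m : ℕ) (hm : m ≤ n)
    (hf : ∀ i j, i < m → j < m → i ≠ j → (f i).1 ≠ (f j).1 ∧ (f i).1 ≠ -(f j).1) :
    ∃ g, ∀ i < m, ((ρ g).1 (f i)).1 = i + 1 := by
  induction m with
  | zero => exact ⟨1, fun i hi => by omega⟩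
  | succ m ih =>
    obtain ⟨g, hg⟩ := ih (by omega) (fun i j hi hj hij => hf i j (by omega) (by omega) hij)
    have hp : InR n (m + 1 : ℤ) := by unfold InR; omega
    obtain ⟨h, h1, h2⟩ := exists_move hρ ((ρ g).1 (f m)) ⟨m + 1, hp.pm⟩
    refine ⟨h * g, fun i hi => ?_⟩
    rw [map_mul]
    show ((ρ h).1 ((ρ g).1 (f i))).1 = _
    by_cases him : i = m
    · subst him; rw [h1]
    · have him' : i < m := by omega
      have hne := hf i m (by omega) (by omega) him
      rw [h2, hg i him']
      · intro hh; have := rho_eq_or_neg _ _ _ (Or.inl hh); tauto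
      · intro hh; have := rho_eq_or_neg _ _ _ (Or.inr hh); tauto
      · rw [hg i him']; dsimp only; omega
      · rw [hg i him']; dsimp only; omega

/-- a point of `[±n]` -/
def pt {n : ℕ} (a : ℤ) (h : InR n a) : PM n := ⟨a, h.pm⟩

theorem exists_two (hρ : RhoOK ρ) (x y : PM n) (hxy : x.1 ≠ y.1 ∧ x.1 ≠ -y.1) :
    ∃ g, ((ρ g).1 x).1 = 1 ∧ ((ρ g).1 y).1 = 2 := by
  obtain ⟨g, hg⟩ := exists_tuple hρ (fun i => if i = 0 then x else y) 2 hn (by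
    intro i j hi hj hij
    split_ifs <;> omega)
  exact ⟨g, by simpa using hg 0 (by omega), by simpa using hg 1 (by omega)⟩

theorem exists_three (hρ : RhoOK ρ) (x y z : PM n) (hxy : x.1 ≠ y.1 ∧ x.1 ≠ -y.1)
    (hxz : x.1 ≠ z.1 ∧ x.1 ≠ -z.1) (hyz : y.1 ≠ z.1 ∧ y.1 ≠ -z.1) :
    3 ≤ n ∧ ∃ g, ((ρ g).1 x).1 = 1 ∧ ((ρ g).1 y).1 = 2 ∧ ((ρ g).1 z).1 = 3 := by
  have hx := x.inR
  have hy := y.inR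
  have hz := z.inR
  unfold InR at hx hy hz
  have h3 : 3 ≤ n := by omega
  refine ⟨h3, ?_⟩
  obtain ⟨g, hg⟩ := exists_tuple hρ (fun i => if i = 0 then x else if i = 1 then y else z) 3 h3 (by
    intro i j hi hj hij
    split_ifs <;> omega)
  exact ⟨g, by simpa using hg 0 (by omega), by simpa using hg 1 (by omega),
    by simpa using hg 2 (by omega)⟩

set_option maxHeartbeats 1000000 in
theorem exists_four (hρ : RhoOK ρ) (x y z w : PM n) (hxy : x.1 ≠ y.1 ∧ x.1 ≠ -y.1)
    (hxz : x.1 ≠ z.1 ∧ x.1 ≠ -z.1) (hyz : y.1 ≠ z.1 ∧ y.1 ≠ -z.1)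
    (hxw : x.1 ≠ w.1 ∧ x.1 ≠ -w.1) (hyw : y.1 ≠ w.1 ∧ y.1 ≠ -w.1) (hzw : z.1 ≠ w.1 ∧ z.1 ≠ -w.1) :
    4 ≤ n ∧ ∃ g, ((ρ g).1 x).1 = 1 ∧ ((ρ g).1 y).1 = 2 ∧ ((ρ g).1 z).1 = 3 ∧
      ((ρ g).1 w).1 = 4 := by
  have hx := x.inR
  have hy := y.inR
  have hz := z.inR
  have hw := w.inR
  unfold InR at hx hy hz hw
  have h3 : 4 ≤ n := by
    have a1 : x.1.natAbs ≠ y.1.natAbs := by omega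
    have a2 : x.1.natAbs ≠ z.1.natAbs := by omega
    have a3 : x.1.natAbs ≠ w.1.natAbs := by omega
    have a4 : y.1.natAbs ≠ z.1.natAbs := by omega
    have a5 : y.1.natAbs ≠ w.1.natAbs := by omega
    have a6 : z.1.natAbs ≠ w.1.natAbs := by omega
    have b1 : 1 ≤ x.1.natAbs ∧ x.1.natAbs ≤ n := by omega
    have b2 : 1 ≤ y.1.natAbs ∧ y.1.natAbs ≤ n := by omega
    have b3 : 1 ≤ z.1.natAbs ∧ z.1.natAbs ≤ n := by omega
    have b4 : 1 ≤ w.1.natAbs ∧ w.1.natAbs ≤ n := by omega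
    generalize x.1.natAbs = a at *
    generalize y.1.natAbs = b at *
    generalize z.1.natAbs = c at *
    generalize w.1.natAbs = d at *
    clear hx hy hz hw hxy hxz hyz hxw hyw hzw
    omega
  refine ⟨h3, ?_⟩
  obtain ⟨g, hg⟩ := exists_tuple hρ
    (fun i => if i = 0 then x else if i = 1 then y else if i = 2 then z else w) 4 h3 (by
    intro i j hi hj hij
    clear hx hy hz hw h3
    split_ifs <;> omega)
  exact ⟨g, by simpa using hg 0 (by omega), by simpa using hg 1 (by omega),
    by simpa using hg 2 (by omega), by simpa using hg 3 (by omega)⟩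

end Transitive

section PiToRho

variable {n : ℕ} {hn : 2 ≤ n}

theorem pi_gen (π : BraidGroupB n hn →* Equiv.Perm (PM n))
    (hπ0 : π (PresentedGroup.of ⟨0, by omega⟩) =
      Equiv.swap (PM.neg (pmOne n hn)) (pmOne n hn))
    (hπ : ∀ i : Fin n, ∀ hi : 1 ≤ i.1,
      π (PresentedGroup.of i) =
        Equiv.swap (pmA i hi) (pmB i) *
          Equiv.swap (PM.neg (pmA i hi)) (PM.neg (pmB i))) (i : Fin n) (x : PM n) :
    (π (PresentedGroup.of i) x).1 = tt i.1 x.1 := by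
  have hs : ∀ a b x : PM n, (Equiv.swap a b x).1 = if x.1 = a.1 then b.1 else if x.1 = b.1 then a.1 else x.1 := by
    intro a b x
    rw [Equiv.swap_apply_def]
    simp only [Subtype.ext_iff]
    split_ifs <;> rfl
  by_cases hi : i.1 = 0
  · obtain ⟨i, hi'⟩ := i
    dsimp only at hi
    subst hi
    rw [hπ0, hs]
    simp only [PM.neg, pmOne, tt]
    split_ifs <;> omega
  · rw [hπ i (by omega), Equiv.Perm.mul_apply, hs, hs]
    have h1 := tt_spec i.1 x.1
    simp only [PM.neg, pmA, pmB]
    split_ifs <;> omega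

theorem pi_mem (π : BraidGroupB n hn →* Equiv.Perm (PM n))
    (h : ∀ (i : Fin n) (x : PM n), (π (PresentedGroup.of i) x).1 = tt i.1 x.1) (g : BraidGroupB n hn) :
    π g ∈ WB n := by
  have := PresentedGroup.generated_by _ ((WB n).comap π) (fun i => by
    show ∀ x, _
    intro x
    apply Subtype.ext
    rw [h]
    show tt i.1 (-x.1) = -_
    rw [h, tt_neg]) g
  exact this

end PiToRho


section Orbit

variable {Y : Type*}

/-- the line of translates starting at position `m` -/
def ln (s : ℕ → Y → Y) (m : ℕ) (y : Y) : ℕ → Y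
  | 0 => y
  | d + 1 => s (m + d) (ln s m y d)

theorem ln_comm {s : ℕ → Y → Y} {m k : ℕ} (d : ℕ)
    (h : ∀ l, m ≤ l → l < m + d → ∀ y, s k (s l y) = s l (s k y)) (y : Y) :
    s k (ln s m y d) = ln s m (s k y) d := by
  induction d with
  | zero => rfl
  | succ d ih =>
    show s k (s (m + d) _) = s (m + d) _
    rw [h _ (by omega) (by omega), ih (fun l h1 h2 => h l h1 (by omega))]

/-- far commutation and braid relations for indices in `[m, N)` -/
structure Bra (s : ℕ → Y → Y) (m N : ℕ) : Prop where
  far : ∀ k l, m ≤ k → k + 2 ≤ l → l < N → ∀ y, s k (s l y) = s l (s k y)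
  braid : ∀ k, m ≤ k → k + 1 < N → ∀ y, s k (s (k + 1) (s k y)) = s (k + 1) (s k (s (k + 1) y))

theorem Bra.mono {s : ℕ → Y → Y} {m N m' N' : ℕ} (h : Bra s m N) (hm : m ≤ m') (hN : N' ≤ N) :
    Bra s m' N' :=
  ⟨fun k l a b c => h.far k l (by omega) b (by omega), fun k a b => h.braid k (by omega) (by omega)⟩

theorem ln_fix {s : ℕ → Y → Y} {m N : ℕ} (hb : Bra s m N) {y : Y}
    (hy : ∀ k, m < k → k < N → s k y = y) (d : ℕ) :
    m + d ≤ N → ∀ k, m ≤ k → k < N → k ≠ m + d → k + 1 ≠ m + d → s k (ln s m y d) = ln s m y d := by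
  induction d using Nat.strong_induction_on with
  | _ d ih =>
    intro hd k h1 h2 h3 h4
    match d, ih with
    | 0, _ => exact hy k (by omega) h2
    | d + 1, ih =>
      show s k (s (m + d) _) = s (m + d) _
      by_cases hk : m + d + 2 ≤ k
      · rw [← hb.far _ _ (by omega) hk h2, ih d (by omega) (by omega) k h1 h2 (by omega) (by omega)]
      · by_cases hk2 : k + 2 ≤ m + d
        · rw [hb.far _ _ h1 hk2 (by omega), ih d (by omega) (by omega) k h1 h2 (by omega) (by omega)]
        · match d, ih with
          | 0, _ => omega
          | d + 1, ih =>
            have hk3 : k = m + d := by omega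
            subst hk3
            show s (m + d) (s (m + d + 1) (s (m + d) _)) = s (m + d + 1) (s (m + d) _)
            rw [hb.braid _ h1 (by omega), ih d (by omega) (by omega) (m + d + 1) (by omega) (by omega)
              (by omega) (by omega)]

theorem ln_back {s : ℕ → Y → Y} {m N : ℕ} (hb : Bra s m N) {y : Y}
    (hy : ∀ k, m < k → k < N → s k y = y) (hy2 : m < N → s m (s m y) = y) (d : ℕ) :
    m + d < N → s (m + d) (ln s m y (d + 1)) = ln s m y d := by
  induction d with
  | zero => exact hy2
  | succ d ih =>
    intro hd
    have h1 := ih (by omega)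
    have h2 := ln_fix hb hy d (by omega) (m + d + 1) (by omega) (by omega) (by omega) (by omega)
    change s (m + d) (s (m + d) (ln s m y d)) = _ at h1
    change s (m + d + 1) (s (m + d + 1) (s (m + d) (ln s m y d))) = s (m + d) (ln s m y d)
    generalize ln s m y d = w at *
    have h3 := hb.braid (m + d) (by omega) (by omega)
    calc s (m + d + 1) (s (m + d + 1) (s (m + d) w))
        = s (m + d + 1) (s (m + d + 1) (s (m + d) (s (m + d + 1) w))) := by rw [h2]
      _ = s (m + d + 1) (s (m + d) (s (m + d + 1) (s (m + d) w))) := by rw [h3]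
      _ = s (m + d) (s (m + d + 1) (s (m + d) (s (m + d) w))) := by rw [← h3]
      _ = s (m + d) w := by rw [h1, h2]

/-- The conjugation relations of the tied monoid, seen in a set with operators. -/
structure TSys (n : ℕ) (s : ℕ → Y → Y) (th : ℕ → Y) (o : Y) : Prop where
  hn : 2 ≤ n
  far : ∀ k l, k + 2 ≤ l → l < n → ∀ y, s k (s l y) = s l (s k y)
  braid : ∀ k, 1 ≤ k → k + 1 < n → ∀ y, s k (s (k + 1) (s k y)) = s (k + 1) (s k (s (k + 1) y))
  b4 : ∀ y, s 0 (s 1 (s 0 (s 1 y))) = s 1 (s 0 (s 1 (s 0 y)))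
  inj : ∀ k, k < n → Function.Injective (s k)
  fix : ∀ k l, k < n → l < n → k + 1 ≠ l → l + 1 ≠ k → s k (th l) = th l
  t4 : ∀ k, 1 ≤ k → k + 1 < n → s k (s (k + 1) (th k)) = th (k + 1)
  t9 : ∀ k, 1 ≤ k → k + 1 < n → s k (s k (th (k + 1))) = th (k + 1)
  t9' : ∀ k, 1 ≤ k → k + 1 < n → s (k + 1) (s (k + 1) (th k)) = th k
  t3a : s 1 (s 0 (s 1 (th 0))) = th 0
  t3b : s 0 (s 1 (s 0 (th 1))) = th 1
  t8a : s 1 (s 1 (th 0)) = th 0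
  t8b : s 0 (s 0 (th 1)) = th 1
  one : ∀ k, k < n → s k o = o

variable {n : ℕ} {s : ℕ → Y → Y} {th : ℕ → Y} {o : Y}

/-- zero-block generators -/
def zz (s : ℕ → Y → Y) (th : ℕ → Y) (i : ℕ) : Y := ln s 1 (th 0) (i - 1)

/-- base point for the sign `c` -/
def xx (s : ℕ → Y → Y) (th : ℕ → Y) (c : Bool) : Y := if c then th 1 else s 0 (th 1)

/-- pairs `(±1, j)` -/
def hh (s : ℕ → Y → Y) (th : ℕ → Y) (c : Bool) (j : ℕ) : Y := ln s 2 (xx s th c) (j - 2)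

/-- pairs `(±i, j)` -/
def gg (s : ℕ → Y → Y) (th : ℕ → Y) (c : Bool) (i j : ℕ) : Y := ln s 1 (hh s th c j) (i - 1)

theorem zz_succ (i : ℕ) (hi : 1 ≤ i) : zz s th (i + 1) = s i (zz s th i) := by
  obtain ⟨d, rfl⟩ := Nat.exists_eq_add_of_le' hi
  show s (1 + d) _ = _
  rw [Nat.add_comm 1 d]; rfl

theorem hh_succ (c : Bool) (i : ℕ) (hi : 2 ≤ i) : hh s th c (i + 1) = s i (hh s th c i) := by
  obtain ⟨d, rfl⟩ := Nat.exists_eq_add_of_le' hi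
  show s (2 + d) _ = _
  rw [Nat.add_comm 2 d]; rfl

theorem gg_succ (c : Bool) (i j : ℕ) (hi : 1 ≤ i) :
    gg s th c (i + 1) j = s i (gg s th c i j) := by
  obtain ⟨d, rfl⟩ := Nat.exists_eq_add_of_le' hi
  show s (1 + d) _ = _
  rw [Nat.add_comm 1 d]; rfl

theorem gg_one (c : Bool) (j : ℕ) : gg s th c 1 j = hh s th c j := rfl

namespace TSys

theorem bra (H : TSys n s th o) : Bra s 1 n :=
  ⟨fun k l _ b c => H.far k l b c, fun k a b => H.braid k a b⟩

theorem zz_up (_H : TSys n s th o) (i : ℕ) (hi : 1 ≤ i) (_ : i < n) :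
    s i (zz s th i) = zz s th (i + 1) :=
  (zz_succ i hi).symm

theorem zz_down (H : TSys n s th o) (i : ℕ) (hi : 1 ≤ i) (h : i < n) :
    s i (zz s th (i + 1)) = zz s th i := by
  have := ln_back (H.bra) (y := th 0) (fun k h1 h2 => H.fix k 0 h2 (by omega) (by omega) (by omega))
    (fun _ => H.t8a) (i - 1) (by omega)
  rw [show 1 + (i - 1) = i by omega, show i - 1 + 1 = i by omega] at this
  exact this

theorem zz_fix (H : TSys n s th o) (i k : ℕ) (hi : 1 ≤ i) (h : i ≤ n) (hk : 1 ≤ k) (hkn : k < n)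
    (h1 : k ≠ i) (h2 : k + 1 ≠ i) : s k (zz s th i) = zz s th i :=
  ln_fix (H.bra) (y := th 0) (fun k h1 h2 => H.fix k 0 h2 (by omega) (by omega) (by omega))
    (i - 1) (by omega) k hk hkn (by omega) (by omega)

theorem zz_zero (H : TSys n s th o) (i : ℕ) (hi : 1 ≤ i) (h : i ≤ n) :
    s 0 (zz s th i) = zz s th i := by
  have hn := H.hn
  induction i, hi using Nat.le_induction with
  | base => exact H.fix 0 0 (by omega) (by omega) (by omega) (by omega)
  | succ i hi ih =>
    rw [zz_succ i hi]
    by_cases h1 : i = 1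
    · subst h1
      show s 0 (s 1 (th 0)) = s 1 (th 0)
      apply H.inj 1 (by omega)
      rw [H.t3a, H.t8a]
    · rw [H.far 0 i (by omega) (by omega), ih (by omega)]

theorem two_one (H : TSys n s th o) (h : 2 < n) : s 2 (th 1) = s 1 (th 2) := by
  apply H.inj 1 (by omega)
  rw [H.t4 1 le_rfl h, H.t9 1 le_rfl h]

theorem xx_one (H : TSys n s th o) (c : Bool) : s 1 (xx s th c) = xx s th c := by
  have hn := H.hn
  cases c
  · show s 1 (s 0 (th 1)) = s 0 (th 1)
    apply H.inj 0 (by omega)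
    rw [H.t3b, H.t8b]
  · exact H.fix 1 1 (by omega) (by omega) (by omega) (by omega)

theorem xx_fix (H : TSys n s th o) (c : Bool) (k : ℕ) (hk : 2 < k) (hkn : k < n) :
    s k (xx s th c) = xx s th c := by
  have h1 : s k (th 1) = th 1 := H.fix k 1 (by omega) (by omega) (by omega) (by omega)
  cases c
  · show s k (s 0 (th 1)) = s 0 (th 1)
    rw [← H.far 0 k (by omega) hkn, h1]
  · exact h1

theorem xx_two (H : TSys n s th o) (c : Bool) (h : 2 < n) :
    s 2 (s 2 (xx s th c)) = xx s th c := by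
  cases c
  · show s 2 (s 2 (s 0 (th 1))) = s 0 (th 1)
    rw [← H.far 0 2 (by omega) h, ← H.far 0 2 (by omega) h, H.t9' 1 le_rfl h]
  · exact H.t9' 1 le_rfl h

theorem xx_three (H : TSys n s th o) (c : Bool) (h : 2 < n) :
    s 0 (s 1 (s 2 (xx s th c))) = s 1 (s 2 (xx s th c)) := by
  have h2 : s 0 (th 2) = th 2 := H.fix 0 2 (by omega) (by omega) (by omega) (by omega)
  cases c
  · show s 0 (s 1 (s 2 (s 0 (th 1)))) = s 1 (s 2 (s 0 (th 1)))
    rw [← H.far 0 2 (by omega) h, H.two_one h, H.b4, h2]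
  · show s 0 (s 1 (s 2 (th 1))) = s 1 (s 2 (th 1))
    rw [H.t4 1 le_rfl h, h2]

theorem xx_zero (H : TSys n s th o) (c : Bool) : s 0 (xx s th c) = xx s th (!c) := by
  cases c
  · exact H.t8b
  · rfl

theorem hh_down (H : TSys n s th o) (c : Bool) (i : ℕ) (hi : 2 ≤ i) (h : i < n) :
    s i (hh s th c (i + 1)) = hh s th c i := by
  have := ln_back (H.bra.mono (by omega : 1 ≤ 2) le_rfl) (y := xx s th c)
    (fun k h1 h2 => H.xx_fix c k h1 h2)
    (fun h => H.xx_two c h) (i - 2) (by omega)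
  rw [show 2 + (i - 2) = i by omega, show i - 2 + 1 = i + 1 - 2 by omega] at this
  exact this

theorem hh_fix (H : TSys n s th o) (c : Bool) (i k : ℕ) (hi : 2 ≤ i) (h : i ≤ n) (hk : 2 ≤ k)
    (hkn : k < n) (h1 : k ≠ i) (h2 : k + 1 ≠ i) : s k (hh s th c i) = hh s th c i :=
  ln_fix (H.bra.mono (by omega : 1 ≤ 2) le_rfl) (y := xx s th c)
    (fun k h1 h2 => H.xx_fix c k h1 h2)
    (i - 2) (by omega) k hk hkn (by omega) (by omega)

theorem hh_zero (H : TSys n s th o) (c : Bool) (j : ℕ) (hj : 2 ≤ j) (h : j ≤ n) :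
    s 0 (hh s th c j) = hh s th (!c) j := by
  unfold hh
  rw [ln_comm (j - 2) (fun l h1 h2 y => H.far 0 l (by omega) (by omega) y), H.xx_zero]

theorem hh_one_one (H : TSys n s th o) (c : Bool) (j : ℕ) (hj : 3 ≤ j) (h : j ≤ n) :
    s 1 (s 1 (hh s th c j)) = hh s th c j := by
  induction j, hj using Nat.le_induction with
  | base =>
    show s 1 (s 1 (s 2 (xx s th c))) = s 2 (xx s th c)
    have h1 := H.xx_one c
    have h2 := H.xx_two c (by omega)
    have h3 := H.braid 1 le_rfl (by omega)
    generalize xx s th c = w at *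
    calc s 1 (s 1 (s 2 w)) = s 1 (s 1 (s 2 (s 1 w))) := by rw [h1]
      _ = s 1 (s 2 (s 1 (s 2 w))) := by rw [h3]
      _ = s 2 (s 1 (s 2 (s 2 w))) := by rw [h3]
      _ = s 2 w := by rw [h2, h1]
  | succ j hj ih =>
    rw [hh_succ c j (by omega), H.far 1 j (by omega) (by omega), H.far 1 j (by omega) (by omega),
      ih (by omega)]

theorem hh_three (H : TSys n s th o) (c : Bool) (j : ℕ) (hj : 3 ≤ j) (h : j ≤ n) :
    s 0 (s 1 (hh s th c j)) = s 1 (hh s th c j) := by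
  induction j, hj using Nat.le_induction with
  | base => exact H.xx_three c (by omega)
  | succ j hj ih =>
    rw [hh_succ c j (by omega), H.far 1 j (by omega) (by omega), H.far 0 j (by omega) (by omega),
      ih (by omega)]

theorem gg_down (H : TSys n s th o) (c : Bool) (i j : ℕ) (hi : 1 ≤ i) (hij : i + 1 < j)
    (hj : j ≤ n) : s i (gg s th c (i + 1) j) = gg s th c i j := by
  have := ln_back (H.bra.mono (le_refl 1) (by omega : j - 1 ≤ n)) (y := hh s th c j)
    (fun k h1 h2 => H.hh_fix c j k (by omega) hj (by omega) (by omega) (by omega) (by omega))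
    (fun h => H.hh_one_one c j (by omega) hj) (i - 1) (by omega)
  rw [show 1 + (i - 1) = i by omega, show i - 1 + 1 = i + 1 - 1 by omega] at this
  exact this

theorem gg_fix (H : TSys n s th o) (c : Bool) (i j k : ℕ) (hi : 1 ≤ i) (hij : i < j)
    (hj : j ≤ n) (hk : 1 ≤ k) (hkj : k + 1 < j) (h1 : k ≠ i) (h2 : k + 1 ≠ i) :
    s k (gg s th c i j) = gg s th c i j :=
  ln_fix (H.bra.mono (le_refl 1) (by omega : j - 1 ≤ n)) (y := hh s th c j)
    (fun k h1 h2 => H.hh_fix c j k (by omega) hj (by omega) (by omega) (by omega) (by omega))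
    (i - 1) (by omega) k hk (by omega) (by omega) (by omega)

theorem gg_push (H : TSys n s th o) (c : Bool) (i j k : ℕ) (hi : 1 ≤ i) (hk : i + 1 ≤ k)
    (hkn : k < n) : s k (gg s th c i j) = ln s 1 (s k (hh s th c j)) (i - 1) := by
  unfold gg
  rw [ln_comm (i - 1) (fun l h1 h2 y => (H.far l k (by omega) (by omega) y).symm)]

theorem gg_up2 (H : TSys n s th o) (c : Bool) (i j : ℕ) (hi : 1 ≤ i) (hij : i < j)
    (hj : j < n) : s j (gg s th c i j) = gg s th c i (j + 1) := by
  rw [H.gg_push c i j j hi hij hj, ← hh_succ (s := s) (th := th) c j (by omega)]; rfl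

theorem gg_down2 (H : TSys n s th o) (c : Bool) (i j : ℕ) (hi : 1 ≤ i) (hij : i < j)
    (hj : j < n) : s j (gg s th c i (j + 1)) = gg s th c i j := by
  rw [H.gg_push c i (j + 1) j hi hij hj, H.hh_down c j (by omega) hj]; rfl

theorem gg_fix2 (H : TSys n s th o) (c : Bool) (i j k : ℕ) (hi : 1 ≤ i) (hij : i < j)
    (hj : j < k) (hk : k < n) : s k (gg s th c i j) = gg s th c i j := by
  rw [H.gg_push c i j k hi (by omega) hk, H.hh_fix c j k (by omega) (by omega) (by omega) hk
    (by omega) (by omega)]; rfl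

theorem gg_diag (H : TSys n s th o) (c : Bool) (i : ℕ) (hi : 1 ≤ i) (h : i < n) :
    s i (gg s th c i (i + 1)) = gg s th c i (i + 1) := by
  induction i, hi using Nat.le_induction with
  | base => exact H.xx_one c
  | succ i hi ih =>
    rw [gg_succ c i _ hi, ← H.gg_up2 c i (i + 1) hi (by omega) h, ← H.braid i hi h, ih (by omega)]

theorem gg_zero_one (H : TSys n s th o) (c : Bool) (j : ℕ) (hj : 2 ≤ j) (h : j ≤ n) :
    s 0 (gg s th c 1 j) = gg s th (!c) 1 j := H.hh_zero c j hj h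

theorem gg_zero (H : TSys n s th o) (c : Bool) (i j : ℕ) (hi : 2 ≤ i) (hij : i < j) (h : j ≤ n) :
    s 0 (gg s th c i j) = gg s th c i j := by
  induction i, hi using Nat.le_induction with
  | base => exact H.hh_three c j (by omega) h
  | succ i hi ih =>
    rw [gg_succ c i j (by omega), H.far 0 i (by omega) (by omega), ih (by omega)]

theorem gg_th (H : TSys n s th o) (i : ℕ) (hi : 1 ≤ i) (h : i < n) :
    gg s th true i (i + 1) = th i := by
  induction i, hi using Nat.le_induction with
  | base => rfl
  | succ i hi ih =>
    rw [gg_succ _ i _ hi, ← H.gg_up2 _ i (i + 1) hi (by omega) h, ih (by omega), H.t4 i hi h]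

end TSys

/-- the element attached to a pair of integers -/
def ee (s : ℕ → Y → Y) (th : ℕ → Y) (o : Y) (a b : ℤ) : Y :=
  if a = b then o else if a = -b then zz s th a.natAbs
  else gg s th (decide (0 < a ↔ 0 < b)) (min a.natAbs b.natAbs) (max a.natAbs b.natAbs)

theorem ee_self (a : ℤ) : ee s th o a a = o := by simp [ee]

theorem ee_symm (a b : ℤ) : ee s th o a b = ee s th o b a := by
  unfold ee
  by_cases h1 : a = b
  · subst h1; rfl
  · by_cases h2 : a = -b
    · rw [if_neg h1, if_neg (Ne.symm h1), if_pos h2, if_pos (by omega), h2, Int.natAbs_neg]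
    · rw [if_neg h1, if_neg (Ne.symm h1), if_neg h2, if_neg (by omega), min_comm, max_comm]
      congr 1
      exact decide_eq_decide.2 iff_comm

theorem ee_neg (a b : ℤ) (ha : a ≠ 0) (hb : b ≠ 0) : ee s th o (-a) (-b) = ee s th o a b := by
  unfold ee
  by_cases h1 : a = b
  · subst h1; simp
  · by_cases h2 : a = -b
    · rw [if_neg h1, if_neg (by omega), if_pos h2, if_pos (by omega), Int.natAbs_neg]
    · rw [if_neg h1, if_neg (by omega), if_neg h2, if_neg (by omega), Int.natAbs_neg,
        Int.natAbs_neg]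
      congr 1
      exact decide_eq_decide.2 (by omega)

theorem ee_zz (i : ℕ) (hi : 1 ≤ i) : ee s th o (-i) i = zz s th i := by
  unfold ee
  rw [if_neg (by omega), if_pos rfl, Int.natAbs_neg, Int.natAbs_natCast]

/-- sign -/
def sg (c : Bool) (a : ℤ) : ℤ := if c then a else -a

theorem ee_gg (c : Bool) (i j : ℕ) (hi : 1 ≤ i) (hj : i < j) :
    ee s th o (sg c i) j = gg s th c i j := by
  cases c
  · show ee s th o (-i) j = _
    unfold ee
    rw [if_neg (by omega), if_neg (by omega), Int.natAbs_neg, Int.natAbs_natCast,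
      Int.natAbs_natCast, min_eq_left hj.le, max_eq_right hj.le]
    congr 1
    exact decide_eq_false (by omega)
  · show ee s th o i j = _
    unfold ee
    rw [if_neg (by omega), if_neg (by omega), Int.natAbs_natCast,
      Int.natAbs_natCast, min_eq_left hj.le, max_eq_right hj.le]
    congr 1
    exact decide_eq_true (by omega)

theorem tt_sg (k : ℕ) (c : Bool) (a : ℤ) : tt k (sg c a) = sg c (tt k a) := by
  cases c
  · exact tt_neg k a
  · rfl

theorem ee_gg_act (H : TSys n s th o) (c : Bool) (i j k : ℕ) (hi : 1 ≤ i) (hj : i < j) (hjn : j ≤ n)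
    (hk : k < n) : s k (gg s th c i j) = ee s th o (tt k (sg c i)) (tt k j) := by
  rw [tt_sg]
  have t1 := tt_spec k i
  have t2 := tt_spec k j
  have key : ∀ (i' j' : ℕ), tt k i = i' → tt k j = j' → 1 ≤ i' → i' < j' →
      s k (gg s th c i j) = gg s th c i' j' →
      s k (gg s th c i j) = ee s th o (sg c (tt k i)) (tt k j) := by
    intro i' j' e1 e2 h1 h2 h
    rw [h, e1, e2, ee_gg c i' j' h1 h2]
  by_cases hk0 : k = 0
  · subst hk0
    by_cases hi1 : i = 1
    · subst hi1
      rw [show tt 0 (1 : ℕ) = -(1 : ℕ) by omega, show tt 0 j = j by omega, H.gg_zero_one c j hj hjn,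
        ← ee_gg (!c) 1 j le_rfl hj]
      cases c <;> rfl
    · exact key i j (by omega) (by omega) hi hj (H.gg_zero c i j (by omega) hj hjn)
  · by_cases h1 : k = i
    · by_cases h2 : j = i + 1
      · subst h1 h2
        have e1 : tt k (k : ℕ) = (k + 1 : ℕ) := by omega
        have e2 : tt k (k + 1 : ℕ) = (k : ℕ) := by omega
        rw [H.gg_diag c k hi hk, e1, e2, ← ee_gg c k (k + 1) hi hj, ee_symm]
        cases c
        · show ee s th o _ (-_) = ee s th o (-_) _
          rw [← ee_neg _ _ (by omega) (by omega), neg_neg]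
        · rfl
      · subst h1
        exact key (k + 1) j (by omega) (by omega) (by omega) (by omega) (gg_succ c k j hi).symm
    · by_cases h2 : k + 1 = i
      · subst h2
        exact key k j (by omega) (by omega) (by omega) (by omega)
          (H.gg_down c k j (by omega) (by omega) hjn)
      · by_cases h3 : k = j
        · subst h3
          exact key i (k + 1) (by omega) (by omega) (by omega) (by omega)
            (H.gg_up2 c i k hi hj hk)
        · by_cases h4 : k + 1 = j
          · subst h4
            exact key i k (by omega) (by omega) (by omega) (by omega)
              (H.gg_down2 c i k hi (by omega) hk)
          · by_cases h5 : k < j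
            · exact key i j (by omega) (by omega) hi hj
                (H.gg_fix c i j k hi hj hjn (by omega) (by omega) h1 h2)
            · exact key i j (by omega) (by omega) hi hj
                (H.gg_fix2 c i j k hi hj (by omega) hk)

theorem ee_zz_act (H : TSys n s th o) (i k : ℕ) (hi : 1 ≤ i) (hin : i ≤ n)
    (hk : k < n) : s k (zz s th i) = ee s th o (tt k (-i)) (tt k i) := by
  rw [tt_neg]
  have t1 := tt_spec k i
  by_cases hk0 : k = 0
  · rw [hk0, H.zz_zero i hi hin]
    by_cases hi1 : i = 1
    · subst hi1 hk0
      rw [show tt 0 (1 : ℕ) = -(1 : ℕ) by omega, neg_neg, ee_symm, ee_zz 1 le_rfl]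
    · rw [← hk0, show tt k i = i by omega, ee_zz i hi]
  · by_cases h1 : k = i
    · subst h1
      rw [show tt k k = (k + 1 : ℕ) by omega, ee_zz _ (by omega), H.zz_up k hi hk]
    · by_cases h2 : k + 1 = i
      · subst h2
        rw [show tt k (k + 1 : ℕ) = (k : ℕ) by omega, ee_zz _ (by omega), H.zz_down k (by omega) hk]
      · rw [show tt k i = i by omega, ee_zz _ (by omega),
          H.zz_fix i k hi hin (by omega) hk h1 h2]

theorem ee_act (H : TSys n s th o) (a b : ℤ) (ha : InR n a) (hb : InR n b) (k : ℕ) (hk : k < n) :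
    s k (ee s th o a b) = ee s th o (tt k a) (tt k b) := by
  have main : ∀ a b : ℤ, InR n a → InR n b → -b ≤ a → a ≤ b →
      s k (ee s th o a b) = ee s th o (tt k a) (tt k b) := by
    intro a b ha hb h1 h2
    unfold InR at ha hb
    obtain ⟨j, rfl⟩ : ∃ j : ℕ, b = j := ⟨b.toNat, by omega⟩
    by_cases e1 : a = j
    · subst e1; rw [ee_self, ee_self, H.one k hk]
    · by_cases e2 : a = -j
      · subst e2
        rw [ee_zz j (by omega), ee_zz_act H j k (by omega) (by omega) hk]
      · obtain ⟨c, i, rfl⟩ : ∃ (c : Bool) (i : ℕ), a = sg c i := by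
          by_cases h0 : 0 < a
          · exact ⟨true, a.toNat, by show a = (a.toNat : ℤ); omega⟩
          · exact ⟨false, (-a).toNat, by show a = -((-a).toNat : ℤ); omega⟩
        have : 1 ≤ i ∧ i < j := by cases c <;> simp [sg] at * <;> omega
        rw [ee_gg c i j this.1 this.2, ee_gg_act H c i j k this.1 this.2 (by omega) hk]
  have main2 : ∀ a b : ℤ, InR n a → InR n b → |a| ≤ |b| →
      s k (ee s th o a b) = ee s th o (tt k a) (tt k b) := by
    intro a b ha hb h1
    rcases lt_or_ge 0 b with h | h
    · rw [abs_of_pos h, abs_le] at h1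
      exact main a b ha hb h1.1 h1.2
    · rw [abs_of_nonpos h, abs_le] at h1
      rw [← ee_neg a b ha.1 hb.1, main (-a) (-b) ha.neg hb.neg (by omega) (by omega), tt_neg, tt_neg,
        ee_neg _ _ (ha.tt hk).1 (hb.tt hk).1]
  rcases le_total |a| |b| with h | h
  · exact main2 a b ha hb h
  · rw [ee_symm, main2 b a hb ha h, ee_symm]

theorem ee_th (H : TSys n s th o) (i : ℕ) (hi : i < n) : ee s th o (lo i) (i + 1) = th i := by
  have h := lo_spec i
  by_cases h0 : i = 0
  · subst h0
    rw [show lo 0 = -(1 : ℕ) by omega]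
    exact ee_zz 1 le_rfl
  · rw [show lo i = sg true i by show lo i = i; omega]
    exact (ee_gg true i (i + 1) (by omega) (by omega)).trans (H.gg_th i (by omega) hi)

end Orbit


section ConjM

variable {M : Type*} [Monoid M]

/-- conjugation by a unit -/
def cj (v : Mˣ) (y : M) : M := v * y * (v⁻¹ : Mˣ)

theorem cj_mul (v : Mˣ) (x y : M) : cj v (x * y) = cj v x * cj v y := by
  simp [cj, mul_assoc]

theorem cj_cj (v w : Mˣ) (y : M) : cj v (cj w y) = cj (v * w) y := by
  simp [cj, mul_assoc]

theorem cj_id (y : M) : cj (1 : Mˣ) y = y := by simp [cj]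

theorem cj_one (v : Mˣ) : cj v (1 : M) = 1 := by simp [cj]

theorem cj_inj (v : Mˣ) : Function.Injective (cj v) := by
  intro x y h
  have := congrArg (cj v⁻¹) h
  rwa [cj_cj, cj_cj, inv_mul_cancel, cj_id, cj_id] at this

theorem cj_swap (v : Mˣ) (y : M) : cj v y * v = v * y := by simp [cj, mul_assoc]

theorem cj_of {v : Mˣ} {y y' : M} (h : (v : M) * y = y' * v) : cj v y = y' := by
  rw [cj, h, mul_assoc, Units.mul_inv, mul_one]

end ConjM

section Back

variable {n : ℕ} {hn : 2 ≤ n}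

local notation "TM" => PresentedMonoid (TBRel n hn)

theorem relM {a b : FreeMonoid (TBGen n)} (h : TBRel n hn a b) :
    PresentedMonoid.mk (TBRel n hn) a = PresentedMonoid.mk (TBRel n hn) b :=
  PresentedMonoid.mk_eq_mk_of_rel h

variable (hn) in
/-- the units `s_i` -/
def gs (i : Fin n) : (PresentedMonoid (TBRel n hn))ˣ :=
  ⟨PresentedMonoid.of _ (.s i), PresentedMonoid.of _ (.s' i), relM (.BB0a i), relM (.BB0b i)⟩

variable (hn) in
/-- the elements `θ_i` -/
def gth (i : Fin n) : PresentedMonoid (TBRel n hn) := PresentedMonoid.of _ (.θ i)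

theorem gs_rel (r : FreeGroup (Fin n)) (h : r ∈ {x | BBRelator n hn x}) :
    FreeGroup.lift (gs hn) r = 1 := by
  rcases h with _ | ⟨i, j, hi, hj, h⟩ | ⟨i, j, h⟩
  · simp only [map_mul, map_inv, FreeGroup.lift_apply_of]
    rw [mul_inv_eq_one]
    exact Units.ext (relM .BB1)
  · simp only [map_mul, map_inv, FreeGroup.lift_apply_of]
    rw [mul_inv_eq_one]
    exact Units.ext (relM (.BB2 i j hi hj h))
  · simp only [map_mul, map_inv, FreeGroup.lift_apply_of]
    rw [mul_inv_eq_one]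
    exact Units.ext (relM (.BB3 i j h))

variable (hn) in
/-- braid group into the units of the tied monoid -/
def UU : BraidGroupB n hn →* (PresentedMonoid (TBRel n hn))ˣ :=
  PresentedGroup.toGroup (f := gs hn) gs_rel

theorem UU_of (i : Fin n) : UU hn (PresentedGroup.of i) = gs hn i := PresentedGroup.toGroup.of _

variable (hn) in
/-- the units `s_k`, indexed by naturals -/
def us (k : ℕ) : (PresentedMonoid (TBRel n hn))ˣ := if h : k < n then gs hn ⟨k, h⟩ else 1

variable (hn) in
/-- the elements `θ_k`, indexed by naturals -/
def ut (k : ℕ) : PresentedMonoid (TBRel n hn) := if h : k < n then gth hn ⟨k, h⟩ else 1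

theorem us_eq {k : ℕ} (h : k < n) : us hn k = gs hn ⟨k, h⟩ := dif_pos h
theorem ut_eq {k : ℕ} (h : k < n) : ut hn k = gth hn ⟨k, h⟩ := dif_pos h

variable (hn) in
/-- conjugation by `s_k` -/
def cs (k : ℕ) (y : PresentedMonoid (TBRel n hn)) : PresentedMonoid (TBRel n hn) := cj (us hn k) y

theorem tsys : TSys n (cs hn) (ut hn) 1 where
  hn := hn
  far k l h1 h2 y := by
    unfold cs
    rw [cj_cj, cj_cj, us_eq (by omega : k < n), us_eq h2]
    congr 1
    exact Units.ext (relM (.BB3 ⟨k, _⟩ ⟨l, _⟩ (Or.inl h1)))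
  braid k h1 h2 y := by
    unfold cs
    rw [cj_cj, cj_cj, cj_cj, cj_cj, us_eq (by omega : k < n), us_eq h2]
    congr 1
    exact Units.ext (relM (.BB2 ⟨k, _⟩ ⟨k + 1, _⟩ h1 (Nat.le_add_left _ _) (Or.inl rfl)))
  b4 y := by
    unfold cs
    rw [cj_cj, cj_cj, cj_cj, cj_cj, cj_cj, cj_cj, us_eq (by omega : 0 < n),
      us_eq (by omega : 1 < n)]
    congr 1
    exact Units.ext (relM .BB1)
  inj k _ := cj_inj _
  fix k l hk hl h1 h2 := by
    unfold cs
    rw [us_eq hk, ut_eq hl]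
    exact cj_of (relM (.TB5 ⟨k, _⟩ ⟨l, _⟩ (not_or.2 ⟨h1, h2⟩)))
  t4 k h1 h2 := by
    unfold cs
    rw [cj_cj, us_eq (by omega : k < n), us_eq h2, ut_eq (by omega : k < n), ut_eq h2]
    exact cj_of (relM (.TB4 ⟨k, _⟩ ⟨k + 1, _⟩ h1 (Nat.le_add_left _ _) (Or.inl rfl)))
  t9 k h1 h2 := by
    unfold cs
    rw [us_eq (by omega : k < n), ut_eq h2]
    have a1 : cj (gs hn ⟨k + 1, h2⟩ * gs hn ⟨k, by omega⟩) (gth hn ⟨k + 1, h2⟩) =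
        gth hn ⟨k, by omega⟩ :=
      cj_of (relM (.TB4 ⟨k + 1, _⟩ ⟨k, _⟩ (Nat.le_add_left _ _) h1 (Or.inr rfl)))
    have a2 : cj (gs hn ⟨k, by omega⟩ * (gs hn ⟨k + 1, h2⟩)⁻¹) (gth hn ⟨k, by omega⟩) =
        gth hn ⟨k + 1, h2⟩ :=
      cj_of ((relM (.TB9 ⟨k, _⟩ ⟨k + 1, _⟩ h1 (Nat.le_add_left _ _) (Or.inl rfl))))
    rw [← a1, cj_cj] at a2
    rw [cj_cj]
    convert a2 using 2
    simp [mul_assoc]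
  t9' k h1 h2 := by
    unfold cs
    rw [us_eq h2, ut_eq (by omega : k < n)]
    have a1 : cj (gs hn ⟨k, by omega⟩ * gs hn ⟨k + 1, h2⟩) (gth hn ⟨k, by omega⟩) =
        gth hn ⟨k + 1, h2⟩ :=
      cj_of (relM (.TB4 ⟨k, _⟩ ⟨k + 1, _⟩ h1 (Nat.le_add_left _ _) (Or.inl rfl)))
    have a2 : cj (gs hn ⟨k + 1, h2⟩ * (gs hn ⟨k, by omega⟩)⁻¹) (gth hn ⟨k + 1, h2⟩) =
        gth hn ⟨k, by omega⟩ :=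
      cj_of ((relM (.TB9 ⟨k + 1, _⟩ ⟨k, _⟩ (Nat.le_add_left _ _) h1 (Or.inr rfl))))
    rw [← a1, cj_cj] at a2
    rw [cj_cj]
    convert a2 using 2
    simp [mul_assoc]
  t3a := by
    unfold cs
    rw [cj_cj, cj_cj, us_eq (by omega : 0 < n), us_eq (by omega : 1 < n), ut_eq (by omega : 0 < n)]
    exact cj_of (relM .TB3a).symm
  t3b := by
    unfold cs
    rw [cj_cj, cj_cj, us_eq (by omega : 0 < n), us_eq (by omega : 1 < n), ut_eq (by omega : 1 < n)]
    exact cj_of (relM .TB3b).symm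
  t8a := by
    unfold cs
    rw [cj_cj, us_eq (by omega : 1 < n), ut_eq (by omega : 0 < n)]
    exact cj_of (relM .TB8a)
  t8b := by
    unfold cs
    rw [cj_cj, us_eq (by omega : 0 < n), ut_eq (by omega : 1 < n)]
    exact cj_of (relM .TB8b)
  one k _ := cj_one _

variable (hn) in
/-- the element attached to a pair -/
def ep (a b : ℤ) : PresentedMonoid (TBRel n hn) := ee (cs hn) (ut hn) 1 a b

theorem ep_self (a : ℤ) : ep hn a a = 1 := ee_self a
theorem ep_symm (a b : ℤ) : ep hn a b = ep hn b a := ee_symm a b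
theorem ep_neg (x y : PM n) : ep hn (-x.1) (-y.1) = ep hn x.1 y.1 := ee_neg _ _ x.2.1 y.2.1

theorem ep_th (i : Fin n) : ep hn (lo i.1) (i.1 + 1) = gth hn i :=
  (ee_th tsys i.1 i.2).trans (ut_eq i.2)

theorem ep_gs (i : Fin n) (a b : ℤ) (ha : InR n a) (hb : InR n b) :
    cj (gs hn i) (ep hn a b) = ep hn (tt i.1 a) (tt i.1 b) := by
  have := ee_act (tsys (hn := hn)) a b ha hb i.1 i.2
  unfold cs at this
  rw [us_eq i.2] at this
  exact this

variable {ρ : BraidGroupB n hn →* WB n}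

theorem ep_act (hρ : RhoOK ρ) (g : BraidGroupB n hn) (x y : PM n) :
    cj (UU hn g) (ep hn x.1 y.1) = ep hn ((ρ g).1 x).1 ((ρ g).1 y).1 := by
  have := PresentedGroup.generated_by _
    ({ carrier := {g | ∀ x y : PM n,
          cj (UU hn g) (ep hn x.1 y.1) = ep hn ((ρ g).1 x).1 ((ρ g).1 y).1}
       mul_mem' := by
        intro a b ha hb x y
        rw [map_mul, map_mul, ← cj_cj, hb, ha]
        rfl
       one_mem' := by
        intro x y
        rw [map_one, map_one, cj_id]
        rfl
       inv_mem' := by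
        intro a ha x y
        apply cj_inj (UU hn a)
        rw [cj_cj, ha, ← map_mul, mul_inv_cancel, map_one, cj_id, map_inv]
        simp } : Subgroup (BraidGroupB n hn)) (fun i => by
      intro x y
      rw [UU_of, hρ, hρ, ep_gs i _ _ x.inR y.inR]) g
  exact this x y

theorem th_idem (i : Fin n) : gth hn i * gth hn i = gth hn i := relM (.TB1 i)
theorem th_comm (i j : Fin n) : gth hn i * gth hn j = gth hn j * gth hn i := relM (.TB2 i j)

theorem th_tb6 (i j : Fin n) (h : adjIdx i j) :
    gth hn i * gth hn j = gth hn j * cj (gs hn i) (gth hn j) := by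
  have h1 : gth hn i * gth hn j * gs hn i = gth hn j * gs hn i * gth hn j := relM (.TB6a i j h)
  rw [mul_assoc (gth hn j), ← cj_swap, ← mul_assoc] at h1
  exact (gs hn i).isUnit.mul_left_injective h1

theorem th_tb7 (i j : Fin n) (h7 : gth hn j * gs hn i * gth hn j * gs hn i =
      gs hn i * gth hn j * gs hn i * gth hn j)
    (h8 : (gs hn i * gs hn i : TM) * gth hn j = gth hn j * gs hn i * gs hn i) :
    Commute (gth hn j) (cj (gs hn i) (gth hn j)) := by
  have h9 : gth hn j * cj (gs hn i) (gth hn j) * gs hn i * gs hn i =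
      cj (gs hn i) (gth hn j) * gth hn j * gs hn i * gs hn i := by
    rw [mul_assoc (gth hn j), cj_swap, ← mul_assoc, h7, ← cj_swap, mul_assoc, mul_assoc,
      ← mul_assoc (gs hn i : TM), h8]
    simp only [mul_assoc]
  exact (gs hn i).isUnit.mul_left_injective ((gs hn i).isUnit.mul_left_injective h9)

/-- index -/
def fi (n k : ℕ) (h : k < n) : Fin n := ⟨k, h⟩

theorem ep0 : ep hn (-1) 1 = gth hn (fi n 0 (by omega)) := ep_th (fi n 0 (by omega))
theorem ep1 : ep hn 1 2 = gth hn (fi n 1 (by omega)) := ep_th (fi n 1 (by omega))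
theorem ep2 (h : 3 ≤ n) : ep hn 2 3 = gth hn (fi n 2 (by omega)) := ep_th (fi n 2 (by omega))
theorem ep3 (h : 4 ≤ n) : ep hn 3 4 = gth hn (fi n 3 (by omega)) := ep_th (fi n 3 (by omega))

theorem cj01 : cj (gs hn (fi n 0 (by omega))) (gth hn (fi n 1 (by omega))) = ep hn (-1) 2 := by
  rw [← ep1, ep_gs _ _ _ (by unfold InR; omega) (by unfold InR; omega)]
  rfl

theorem cj10 : cj (gs hn (fi n 1 (by omega))) (gth hn (fi n 0 (by omega))) = ep hn (-2) 2 := by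
  rw [← ep0, ep_gs _ _ _ (by unfold InR; omega) (by unfold InR; omega)]
  rfl

theorem cj12 (h : 3 ≤ n) :
    cj (gs hn (fi n 1 (by omega))) (gth hn (fi n 2 (by omega))) = ep hn 1 3 := by
  rw [← ep2 h, ep_gs _ _ _ (by unfold InR; omega) (by unfold InR; omega)]
  rfl

theorem six01 : ep hn (-1) 1 * ep hn 1 2 = ep hn 1 2 * ep hn (-1) 2 := by
  rw [ep0, ep1, ← cj01]; exact th_tb6 _ _ (Or.inl rfl)

theorem six10 : ep hn 1 2 * ep hn (-1) 1 = ep hn (-1) 1 * ep hn (-2) 2 := by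
  rw [ep0, ep1, ← cj10]; exact th_tb6 _ _ (Or.inr rfl)

theorem six12 (h : 3 ≤ n) : ep hn 1 2 * ep hn 2 3 = ep hn 2 3 * ep hn 1 3 := by
  rw [ep1, ep2 h, ← cj12 h]; exact th_tb6 _ _ (Or.inl rfl)

theorem sev0 : Commute (ep hn 1 2) (ep hn (-1) 2) := by
  rw [ep1, ← cj01]; exact th_tb7 _ _ (relM .TB7a) (relM .TB8b)

theorem sev1 : Commute (ep hn (-1) 1) (ep hn (-2) 2) := by
  rw [ep0, ← cj10]; exact th_tb7 _ _ (relM .TB7b) (relM .TB8a)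

end Back


section Back2

variable {n : ℕ} {hn : 2 ≤ n} {ρ : BraidGroupB n hn →* WB n}

/-- generic pair -/
def Gn (x y : PM n) : Prop := x.1 ≠ y.1 ∧ x.1 ≠ -y.1

theorem Gn.symm {x y : PM n} (h : Gn x y) : Gn y x := by unfold Gn at *; omega

theorem rho_neg (g : BraidGroupB n hn) (x : PM n) :
    ((ρ g).1 x.neg).1 = -((ρ g).1 x).1 := by rw [WB.neg]; rfl

theorem ep_ng (a b : ℤ) (ha : a ≠ 0) (hb : b ≠ 0) : ep hn (-a) (-b) = ep hn a b := ee_neg a b ha hb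

theorem ep_idem (hρ : RhoOK ρ) (x y : PM n) : ep hn x.1 y.1 * ep hn x.1 y.1 = ep hn x.1 y.1 := by
  have tr : ∀ g, (ep hn ((ρ g).1 x).1 ((ρ g).1 y).1 * ep hn ((ρ g).1 x).1 ((ρ g).1 y).1 =
      ep hn ((ρ g).1 x).1 ((ρ g).1 y).1) → ep hn x.1 y.1 * ep hn x.1 y.1 = ep hn x.1 y.1 := by
    intro g h
    apply cj_inj (UU hn g)
    rw [cj_mul, ep_act hρ, h]
  by_cases h1 : x.1 = y.1
  · rw [h1, ep_self, mul_one]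
  · by_cases h2 : x.1 = -y.1
    · obtain ⟨g, hg, -⟩ := exists_move hρ y ⟨1, (by unfold InR; omega : InR n 1).pm⟩
      apply tr g
      have hx : x = y.neg := Subtype.ext h2
      rw [hx, rho_neg, hg]
      show ep hn (-1) 1 * ep hn (-1) 1 = ep hn (-1) 1
      rw [ep0]; exact th_idem _
    · obtain ⟨g, e1, e2⟩ := exists_two hρ x y ⟨h1, h2⟩
      apply tr g
      rw [e1, e2, ep1]; exact th_idem _

theorem epcomm_of (hρ : RhoOK ρ) (g : BraidGroupB n hn) (x y z w : PM n)
    (h : Commute (ep hn ((ρ g).1 x).1 ((ρ g).1 y).1) (ep hn ((ρ g).1 z).1 ((ρ g).1 w).1)) :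
    Commute (ep hn x.1 y.1) (ep hn z.1 w.1) := by
  apply cj_inj (UU hn g)
  rw [cj_mul, cj_mul, ep_act hρ, ep_act hρ]
  exact h

theorem comm1 (hρ : RhoOK ρ) (x y : PM n) (h : Gn x y) :
    Commute (ep hn x.1 (-x.1)) (ep hn y.1 (-y.1)) := by
  obtain ⟨g, e1, e2⟩ := exists_two hρ x y h
  apply epcomm_of hρ g x x.neg y y.neg
  rw [rho_neg, rho_neg, e1, e2, ep_symm, ep_symm 2]
  exact sev1

theorem comm2 (hρ : RhoOK ρ) (x y : PM n) (h : Gn x y) :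
    Commute (ep hn x.1 (-x.1)) (ep hn x.1 y.1) := by
  obtain ⟨g, e1, e2⟩ := exists_two hρ x y h
  apply epcomm_of hρ g x x.neg x y
  rw [rho_neg, e1, e2, ep_symm, ep0, ep1]
  exact th_comm _ _

theorem comm3 (hρ : RhoOK ρ) (x y z : PM n) (h1 : Gn x y) (h2 : Gn x z) (h3 : Gn y z) :
    Commute (ep hn x.1 (-x.1)) (ep hn y.1 z.1) := by
  obtain ⟨hn3, g, e1, e2, e3⟩ := exists_three hρ x y z h1 h2 h3
  apply epcomm_of hρ g x x.neg y z
  rw [rho_neg, e1, e2, e3, ep_symm, ep0, ep2 hn3]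
  exact th_comm _ _

theorem comm4 (hρ : RhoOK ρ) (x y : PM n) (h : Gn x y) :
    Commute (ep hn x.1 y.1) (ep hn x.1 (-y.1)) := by
  obtain ⟨g, e1, e2⟩ := exists_two hρ x y h
  apply epcomm_of hρ g x y x y.neg
  rw [rho_neg, e1, e2, ← ep_ng 1 (-2) (by omega) (by omega)]
  exact sev0

theorem comm5 (hρ : RhoOK ρ) (x y z : PM n) (h1 : Gn x y) (h2 : Gn x z) (h3 : Gn y z) :
    Commute (ep hn x.1 y.1) (ep hn x.1 z.1) := by
  obtain ⟨hn3, g, e1, e2, e3⟩ := exists_three hρ y x z h1.symm h3 h2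
  apply epcomm_of hρ g x y x z
  rw [e1, e2, e3, ep_symm 2 1, ep1, ep2 hn3]
  exact th_comm _ _

theorem comm6 (hρ : RhoOK ρ) (x y z w : PM n) (h1 : Gn x y) (h2 : Gn x z) (h3 : Gn y z)
    (h4 : Gn x w) (h5 : Gn y w) (h6 : Gn z w) :
    Commute (ep hn x.1 y.1) (ep hn z.1 w.1) := by
  obtain ⟨hn3, g, e1, e2, e3, e4⟩ := exists_four hρ x y z w h1 h2 h3 h4 h5 h6
  apply epcomm_of hρ g x y z w
  rw [e1, e2, e3, e4, ep1, ep3 hn3]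
  exact th_comm _ _

theorem ep_mv (x y : PM n) : ep hn (-x.1) y.1 = ep hn x.1 (-y.1) := by
  have := ep_ng (hn := hn) x.1 (-y.1) x.2.1 (neg_ne_zero.2 y.2.1)
  rwa [neg_neg] at this

theorem Gn.neg {x y : PM n} (h : Gn x y) : Gn x y.neg := by
  unfold Gn at *
  rw [PM.neg_val]; omega

theorem comm23a (hρ : RhoOK ρ) (x y z : PM n) (h : Gn y z) (h1 : ¬ Gn x y) :
    Commute (ep hn x.1 (-x.1)) (ep hn y.1 z.1) := by
  unfold Gn at *
  by_cases h2 : y.1 = x.1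
  · rw [h2]; exact comm2 hρ x z (by unfold Gn; omega)
  · have h3 : y.1 = -x.1 := by omega
    rw [h3, ep_mv]
    exact comm2 hρ x z.neg (Gn.neg (by unfold Gn; omega))

theorem comm23 (hρ : RhoOK ρ) (x y z : PM n) (h : Gn y z) :
    Commute (ep hn x.1 (-x.1)) (ep hn y.1 z.1) := by
  by_cases h1 : Gn x y
  · by_cases h2 : Gn x z
    · exact comm3 hρ x y z h1 h2 h
    · rw [ep_symm y.1]; exact comm23a hρ x z y h.symm h2
  · exact comm23a hρ x y z h h1

theorem comm45 (hρ : RhoOK ρ) (x y w : PM n) (h : Gn x y) (h1 : Gn x w) :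
    Commute (ep hn x.1 y.1) (ep hn x.1 w.1) := by
  by_cases h2 : Gn y w
  · exact comm5 hρ x y w h h1 h2
  · by_cases h3 : w.1 = y.1
    · rw [h3]
    · have : w.1 = -y.1 := by unfold Gn at *; omega
      rw [this]; exact comm4 hρ x y h

theorem comm45' (hρ : RhoOK ρ) (x y z w : PM n) (h : Gn x y) (h1 : Gn z w) (h0 : ¬ Gn x z) :
    Commute (ep hn x.1 y.1) (ep hn z.1 w.1) := by
  unfold Gn at *
  by_cases h2 : z.1 = x.1
  · rw [h2]; exact comm45 hρ x y w h (by unfold Gn; omega)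
  · have h3 : z.1 = -x.1 := by omega
    rw [h3, ep_mv]
    exact comm45 hρ x y w.neg h (Gn.neg (by unfold Gn; omega))

theorem ep_comm (hρ : RhoOK ρ) (x y z w : PM n) :
    Commute (ep hn x.1 y.1) (ep hn z.1 w.1) := by
  by_cases h1 : x.1 = y.1
  · rw [h1, ep_self]; exact Commute.one_left _
  by_cases h2 : z.1 = w.1
  · rw [h2, ep_self]; exact Commute.one_right _
  by_cases h3 : y.1 = -x.1
  · by_cases h4 : w.1 = -z.1
    · rw [h3, h4]
      by_cases h5 : Gn x z
      · exact comm1 hρ x z h5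
      · unfold Gn at h5
        by_cases h6 : z.1 = x.1
        · rw [h6]
        · have h7 : z.1 = -x.1 := by omega
          rw [h7, neg_neg, ep_symm (-x.1)]
    · rw [h3]; exact comm23 hρ x z w ⟨h2, by omega⟩
  · by_cases h4 : w.1 = -z.1
    · rw [h4]; exact (comm23 hρ z x y ⟨h1, by omega⟩).symm
    · have g1 : Gn x y := ⟨h1, by omega⟩
      have g2 : Gn z w := ⟨h2, by omega⟩
      by_cases c1 : Gn x z
      · by_cases c2 : Gn x w
        · by_cases c3 : Gn y z
          · by_cases c4 : Gn y w
            · exact comm6 hρ x y z w g1 c1 c3 c2 c4 g2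
            · rw [ep_symm z.1, ep_symm x.1]; exact comm45' hρ y x w z g1.symm g2.symm c4
          · rw [ep_symm x.1]; exact comm45' hρ y x z w g1.symm g2 c3
        · rw [ep_symm z.1]; exact comm45' hρ x y w z g1 g2.symm c2
      · exact comm45' hρ x y z w g1 g2 c1

theorem tri_of (hρ : RhoOK ρ) (g : BraidGroupB n hn) (x y z : PM n)
    (h : ep hn ((ρ g).1 x).1 ((ρ g).1 y).1 * ep hn ((ρ g).1 y).1 ((ρ g).1 z).1 *
        ep hn ((ρ g).1 x).1 ((ρ g).1 z).1 =
      ep hn ((ρ g).1 x).1 ((ρ g).1 y).1 * ep hn ((ρ g).1 y).1 ((ρ g).1 z).1) :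
    ep hn x.1 y.1 * ep hn y.1 z.1 * ep hn x.1 z.1 = ep hn x.1 y.1 * ep hn y.1 z.1 := by
  apply cj_inj (UU hn g)
  rw [cj_mul, cj_mul, ep_act hρ, ep_act hρ, ep_act hρ]
  exact h

theorem p1 (hn : 2 ≤ n) : InR n 1 := by unfold InR; omega
theorem p2 (hn : 2 ≤ n) : InR n 2 := by unfold InR; omega

theorem ep_idem' (hρ : RhoOK ρ) (a b : ℤ) (ha : InR n a) (hb : InR n b) :
    ep hn a b * ep hn a b = ep hn a b := ep_idem hρ (pt a ha) (pt b hb)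

theorem ep_comm' (hρ : RhoOK ρ) (a b c d : ℤ) (ha : InR n a) (hb : InR n b) (hc : InR n c)
    (hd : InR n d) : ep hn a b * ep hn c d = ep hn c d * ep hn a b :=
  ep_comm hρ (pt a ha) (pt b hb) (pt c hc) (pt d hd)

theorem tri_a (hρ : RhoOK ρ) (y z : PM n) (h : Gn y z) :
    ep hn (-y.1) y.1 * ep hn y.1 z.1 * ep hn (-y.1) z.1 = ep hn (-y.1) y.1 * ep hn y.1 z.1 := by
  obtain ⟨g, e1, e2⟩ := exists_two hρ y z h
  apply tri_of hρ g y.neg y z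
  rw [rho_neg, e1, e2, six01, mul_assoc, ep_idem' hρ _ _ (p1 hn).neg (p2 hn)]

theorem tri_c (hρ : RhoOK ρ) (x y : PM n) (h : Gn x y) :
    ep hn x.1 y.1 * ep hn y.1 (-x.1) * ep hn x.1 (-x.1) = ep hn x.1 y.1 * ep hn y.1 (-x.1) := by
  obtain ⟨g, e1, e2⟩ := exists_two hρ x y h
  apply tri_of hρ g x y x.neg
  rw [rho_neg, e1, e2, ep_symm 2 (-1), ep_symm 1 (-1), ← six01, mul_assoc,
    ep_comm' hρ 1 2 (-1) 1 (p1 hn) (p2 hn) (p1 hn).neg (p1 hn), ← mul_assoc,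
    ep_idem' hρ _ _ (p1 hn).neg (p1 hn)]

theorem ep_tri (hρ : RhoOK ρ) (x y z : PM n) :
    ep hn x.1 y.1 * ep hn y.1 z.1 * ep hn x.1 z.1 = ep hn x.1 y.1 * ep hn y.1 z.1 := by
  by_cases h1 : x.1 = y.1
  · rw [h1, ep_self, one_mul, ep_idem hρ]
  by_cases h2 : y.1 = z.1
  · rw [h2, ep_self, mul_one, ep_idem hρ]
  by_cases h3 : x.1 = z.1
  · rw [h3, ep_self, mul_one]
  by_cases h4 : x.1 = -y.1
  · rw [h4]; exact tri_a hρ y z (by unfold Gn; omega)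
  by_cases h5 : z.1 = -y.1
  · have := tri_a hρ y x (by unfold Gn; omega)
    rw [h5, ep_symm y.1 (-y.1), ep_symm x.1, ep_symm x.1,
      ep_comm' hρ _ _ _ _ y.inR x.inR y.inR.neg y.inR]
    exact this
  by_cases h6 : z.1 = -x.1
  · rw [h6]; exact tri_c hρ x y (by unfold Gn; omega)
  have hx := x.inR
  have hy := y.inR
  have hz := z.inR
  obtain ⟨hn3, g, e1, e2, e3⟩ := exists_three hρ x y z ⟨h1, h4⟩ ⟨h3, by omega⟩ ⟨h2, by omega⟩
  apply tri_of hρ g x y z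
  have p3 : InR n 3 := by unfold InR; omega
  rw [e1, e2, e3, six12 hn3, mul_assoc, ep_idem' hρ _ _ (p1 hn) p3]

theorem ep_zero (hρ : RhoOK ρ) (x y : PM n) :
    ep hn x.1 (-x.1) * ep hn y.1 (-y.1) * ep hn x.1 y.1 =
      ep hn x.1 (-x.1) * ep hn y.1 (-y.1) := by
  by_cases h1 : x.1 = y.1
  · rw [h1, ep_self, mul_one]
  by_cases h2 : y.1 = -x.1
  · rw [h2, neg_neg, ep_symm (-x.1), ep_idem' hρ _ _ x.inR x.inR.neg,
      ep_idem' hρ _ _ x.inR x.inR.neg]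
  obtain ⟨g, e1, e2⟩ := exists_two hρ x y ⟨h1, by omega⟩
  apply cj_inj (UU hn g)
  have a1 := ep_act hρ g x x.neg
  have a2 := ep_act hρ g y y.neg
  rw [rho_neg, e1] at a1
  rw [rho_neg, e2] at a2
  rw [cj_mul, cj_mul]
  change _ * cj (UU hn g) (ep hn y.1 y.neg.1) * _ = cj (UU hn g) (ep hn x.1 x.neg.1) * cj (UU hn g) (ep hn y.1 y.neg.1)
  change cj (UU hn g) (ep hn x.1 x.neg.1) * _ * _ = _
  rw [a1, a2, ep_act hρ, e1, e2, ep_symm 1 (-1), ep_symm 2 (-2), ← six10,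
    mul_assoc, ep_comm' hρ (-1) 1 1 2 (p1 hn).neg (p1 hn) (p1 hn) (p2 hn), ← mul_assoc,
    ep_idem' hρ _ _ (p1 hn) (p2 hn)]

end Back2


section Phi

variable {n : ℕ} {hn : 2 ≤ n} {ρ : BraidGroupB n hn →* WB n}

instance PM_finite (n : ℕ) : Finite (PM n) := by
  have : Finite (Set.Icc (-(n : ℤ)) n) := inferInstance
  exact Finite.of_injective (fun x : PM n => (⟨x.1, x.inR.2⟩ : Set.Icc (-(n : ℤ)) n))
    (fun x y h => Subtype.ext (congrArg (fun z : Set.Icc (-(n : ℤ)) n => z.1) h))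

theorem exists_pairs (n : ℕ) : ∃ L : List (PM n × PM n), ∀ p, p ∈ L := by
  have := Fintype.ofFinite (PM n × PM n)
  exact ⟨Finset.univ.toList, fun p => by simp⟩

/-- list of all pairs -/
noncomputable def allPairs (n : ℕ) : List (PM n × PM n) := (exists_pairs n).choose

theorem mem_allPairs (p : PM n × PM n) : p ∈ allPairs n := (exists_pairs n).choose_spec p

open Classical in
/-- factor -/
noncomputable def fac (hn : 2 ≤ n) (I : BP n) (p : PM n × PM n) : PresentedMonoid (TBRel n hn) :=
  if I.1 p.1 p.2 then ep hn p.1.1 p.2.1 else 1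

/-- idempotent attached to a partition -/
noncomputable def Phi (hn : 2 ≤ n) (I : BP n) : PresentedMonoid (TBRel n hn) :=
  ((allPairs n).map (fac hn I)).prod

theorem fac_pos {I : BP n} {x y : PM n} (h : I.1 x y) : fac hn I (x, y) = ep hn x.1 y.1 := if_pos h

theorem list_abs {M α : Type*} [Monoid M] (f : α → M) (Y : M) (l : List α)
    (h : ∀ p ∈ l, Y * f p = Y) : Y * (l.map f).prod = Y := by
  induction l with
  | nil => simp
  | cons a l ih =>
    rw [List.map_cons, List.prod_cons, ← mul_assoc, h a (by simp), ih (fun p hp => h p (by simp [hp]))]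

theorem list_comm {M α : Type*} [Monoid M] (f : α → M) (Y : M) (l : List α)
    (h : ∀ p ∈ l, Commute Y (f p)) : Commute Y (l.map f).prod :=
  Commute.list_prod_right _ _ (by
    intro z hz
    obtain ⟨p, hp, rfl⟩ := List.mem_map.1 hz
    exact h p hp)

theorem list_self {M α : Type*} [Monoid M] (f : α → M) (l : List α) (p : α) (hp : p ∈ l)
    (hi : f p * f p = f p) (h : ∀ q ∈ l, Commute (f p) (f q)) : (l.map f).prod * f p = (l.map f).prod := by
  induction l with
  | nil => simp at hp
  | cons a l ih =>
    have hl : ∀ q ∈ l, Commute (f p) (f q) := fun q hq => h q (by simp [hq])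
    rw [List.map_cons, List.prod_cons, mul_assoc]
    rcases List.mem_cons.1 hp with rfl | hp
    · rw [← (list_comm f (f p) l hl).eq, ← mul_assoc, hi]
    · rw [ih hp hl]

theorem fac_comm (hρ : RhoOK ρ) (I : BP n) (x y : PM n) (p : PM n × PM n) :
    Commute (ep hn x.1 y.1) (fac hn I p) := by
  unfold fac
  split_ifs
  · exact ep_comm hρ _ _ _ _
  · exact Commute.one_right _

theorem Phi_comm (hρ : RhoOK ρ) (I : BP n) (x y : PM n) : Commute (ep hn x.1 y.1) (Phi hn I) :=
  list_comm _ _ _ (fun p _ => fac_comm hρ I x y p)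

theorem Phi_abs (hρ : RhoOK ρ) (I : BP n) (x y : PM n) (h : I.1 x y) :
    Phi hn I * ep hn x.1 y.1 = Phi hn I := by
  have := list_self (fac hn I) (allPairs n) (x, y) (mem_allPairs _)
    (by rw [fac_pos h]; exact ep_idem hρ _ _)
    (fun q _ => by rw [fac_pos h]; exact fac_comm hρ I x y q)
  rw [fac_pos h] at this
  exact this

theorem abs_Phi (I : BP n) (Y : PresentedMonoid (TBRel n hn))
    (h : ∀ x y : PM n, I.1 x y → Y * ep hn x.1 y.1 = Y) : Y * Phi hn I = Y := by
  apply list_abs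
  rintro ⟨x, y⟩ -
  unfold fac
  split_ifs with h1
  · exact h x y h1
  · exact mul_one _

theorem comm_Phi (I : BP n) (Y : PresentedMonoid (TBRel n hn))
    (h : ∀ x y : PM n, Commute Y (ep hn x.1 y.1)) : Commute Y (Phi hn I) := by
  apply list_comm
  rintro ⟨x, y⟩ -
  unfold fac
  split_ifs with h1
  · exact h x y
  · exact Commute.one_right _

/-- partition of absorbed pairs -/
def Kp (hρ : RhoOK ρ) (Y : PresentedMonoid (TBRel n hn)) : BP n :=
  ⟨{ r := fun x y => Y * ep hn x.1 y.1 = Y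
     iseqv := ⟨fun x => by rw [ep_self, mul_one], fun {x y} h => by rwa [ep_symm],
      fun {x y z} h1 h2 => by
        have := ep_tri hρ x y z
        calc Y * ep hn x.1 z.1 = Y * ep hn x.1 y.1 * ep hn y.1 z.1 * ep hn x.1 z.1 := by
              rw [h1, h2]
          _ = Y * (ep hn x.1 y.1 * ep hn y.1 z.1 * ep hn x.1 z.1) := by simp only [mul_assoc]
          _ = Y := by rw [this, ← mul_assoc, h1, h2]⟩ }, by
    rw [isBPart_iff]
    constructor
    · intro x y
      show Y * ep hn x.1 y.1 = Y ↔ Y * ep hn (-x.1) (-y.1) = Y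
      rw [ep_neg]
    · intro x y h1 h2
      change Y * ep hn x.1 (-x.1) = Y at h1
      change Y * ep hn y.1 (-y.1) = Y at h2
      show Y * ep hn x.1 y.1 = Y
      have := ep_zero hρ x y
      calc Y * ep hn x.1 y.1 = Y * ep hn x.1 (-x.1) * ep hn y.1 (-y.1) * ep hn x.1 y.1 := by
              rw [h1, h2]
          _ = Y * (ep hn x.1 (-x.1) * ep hn y.1 (-y.1) * ep hn x.1 y.1) := by simp only [mul_assoc]
          _ = Y := by rw [this, ← mul_assoc, h1, h2]⟩

theorem Kp_iff (hρ : RhoOK ρ) (Y : PresentedMonoid (TBRel n hn)) (x y : PM n) :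
    (Kp hρ Y).1 x y ↔ Y * ep hn x.1 y.1 = Y := Iff.rfl

theorem Kp_le (hρ : RhoOK ρ) (Y : PresentedMonoid (TBRel n hn)) (I : BP n) (h : I ≤ Kp hρ Y) :
    Y * Phi hn I = Y := abs_Phi I Y (fun x y hxy => h hxy)

theorem le_Kp_Phi (hρ : RhoOK ρ) (I : BP n) : I ≤ Kp hρ (Phi hn I) :=
  fun {_ _} h => Phi_abs hρ I _ _ h

theorem Phi_Phi (hρ : RhoOK ρ) (I J : BP n) : Commute (Phi hn I) (Phi hn J) :=
  comm_Phi J _ (fun x y => (Phi_comm hρ I x y).symm)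

theorem Phi_sup (hρ : RhoOK ρ) (I J : BP n) : Phi hn (I ⊔ J) = Phi hn I * Phi hn J := by
  have h1 : Phi hn I * Phi hn J * Phi hn (I ⊔ J) = Phi hn I * Phi hn J := by
    apply Kp_le hρ
    apply sup_le
    · intro x y h
      show _ * _ = _
      rw [mul_assoc, ← (Phi_comm hρ J x y).eq, ← mul_assoc, Phi_abs hρ I x y h]
    · intro x y h
      show _ * _ = _
      rw [mul_assoc, Phi_abs hρ J x y h]
  have h2 : Phi hn (I ⊔ J) * Phi hn I = Phi hn (I ⊔ J) :=
    Kp_le hρ _ _ (le_sup_left.trans (le_Kp_Phi hρ _))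
  have h3 : Phi hn (I ⊔ J) * Phi hn J = Phi hn (I ⊔ J) :=
    Kp_le hρ _ _ (le_sup_right.trans (le_Kp_Phi hρ _))
  rw [← h1, ((Phi_Phi hρ I (I ⊔ J)).mul_left (Phi_Phi hρ J (I ⊔ J))).eq, ← mul_assoc, h2, h3]

theorem Phi_bot (hn : 2 ≤ n) : Phi hn (⊥ : BP n) = 1 := by
  have := abs_Phi (hn := hn) (⊥ : BP n) 1 (by
    intro x y h
    rw [BP.bot_val] at h
    have : x = y := h
    rw [this, ep_self, one_mul])
  rwa [one_mul] at this

theorem Phi_BE (hρ : RhoOK ρ) (x y : PM n) : Phi hn (BE x.1 y.1) = ep hn x.1 y.1 := by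
  have h1 : ep hn x.1 y.1 * Phi hn (BE x.1 y.1) = ep hn x.1 y.1 := by
    apply Kp_le hρ
    rw [BE_le]
    exact ep_idem hρ x y
  have h2 : Phi hn (BE x.1 y.1) * ep hn x.1 y.1 = Phi hn (BE x.1 y.1) :=
    Phi_abs hρ _ _ _ ((BE_le x y _).1 le_rfl)
  rw [← h2, ← (Phi_comm hρ _ x y).eq, h1]

theorem Phi_act_le (hρ : RhoOK ρ) (g : BraidGroupB n hn) (I : BP n) :
    cj (UU hn g) (Phi hn I) * Phi hn (BPact (ρ g) I) = cj (UU hn g) (Phi hn I) := by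
  apply abs_Phi
  intro x y h
  have h2 : I.1 ((ρ g).1.symm x) ((ρ g).1.symm y) := h
  have h3 := ep_act hρ g ((ρ g).1.symm x) ((ρ g).1.symm y)
  rw [Equiv.apply_symm_apply, Equiv.apply_symm_apply] at h3
  rw [← h3, ← cj_mul, Phi_abs hρ I _ _ h2]

theorem Phi_act (hρ : RhoOK ρ) (g : BraidGroupB n hn) (I : BP n) :
    cj (UU hn g) (Phi hn I) = Phi hn (BPact (ρ g) I) := by
  have h1 := Phi_act_le hρ g I
  have h2 := Phi_act_le hρ g⁻¹ (BPact (ρ g) I)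
  rw [← BPact_mul, ← map_mul, inv_mul_cancel, map_one, BPact_one] at h2
  have h3 := congrArg (cj (UU hn g)) h2
  rw [cj_mul, cj_cj, ← map_mul, mul_inv_cancel, map_one, cj_id] at h3
  have h4 : Commute (cj (UU hn g) (Phi hn I)) (Phi hn (BPact (ρ g) I)) := by
    apply comm_Phi
    intro x y
    have h3 := ep_act hρ g ((ρ g).1.symm x) ((ρ g).1.symm y)
    rw [Equiv.apply_symm_apply, Equiv.apply_symm_apply] at h3
    rw [← h3]
    have := (Phi_comm hρ I ((ρ g).1.symm x) ((ρ g).1.symm y)).symm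
    show _ * _ = _ * _
    rw [← cj_mul, this.eq, cj_mul]
  rw [← h1, h4.eq, h3]

/-- the inverse map -/
noncomputable def GG (hρ : RhoOK ρ) : SD n ρ →* PresentedMonoid (TBRel n hn) where
  toFun p := Phi hn p.fst * UU hn p.snd
  map_one' := by
    show Phi hn ⊥ * Units.val (UU hn 1) = _
    rw [Phi_bot, map_one, Units.val_one, mul_one]
  map_mul' p q := by
    rw [SD.mul_fst, SD.mul_snd, Phi_sup hρ, ← Phi_act hρ, map_mul, Units.val_mul]
    rw [mul_assoc (Phi hn p.fst), ← mul_assoc (cj _ _), cj_swap]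
    simp only [mul_assoc]

/-- the forward map -/
noncomputable def FF (hρ : RhoOK ρ) : PresentedMonoid (TBRel n hn) →* SD n ρ :=
  PresentedMonoid.lift (fwdGen ρ) (fwd_rel hρ)

theorem GF (hρ : RhoOK ρ) : (GG hρ).comp (FF hρ) = MonoidHom.id _ := by
  apply PresentedMonoid.ext
  intro a
  show GG hρ (fwdGen ρ a) = _
  cases a with
  | s i =>
    show Phi hn ⊥ * Units.val (UU hn (PresentedGroup.of i)) = PresentedMonoid.of _ _
    rw [Phi_bot, UU_of, one_mul]; rfl
  | s' i =>
    show Phi hn ⊥ * Units.val (UU hn (PresentedGroup.of i)⁻¹) = PresentedMonoid.of _ _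
    rw [Phi_bot, map_inv, UU_of, one_mul]; rfl
  | θ i =>
    show Phi hn (BE (lo i.1) (i.1 + 1)) * Units.val (UU hn 1) = PresentedMonoid.of _ _
    rw [map_one, Units.val_one, mul_one]
    exact (Phi_BE hρ (pt _ (lo_inR i)) (pt _ (hi_inR i))).trans (ep_th i)

theorem FF_inj (hρ : RhoOK ρ) : Function.Injective (FF hρ) := by
  intro x y h
  have := congrArg (GG hρ) h
  have e : ∀ z, GG hρ (FF hρ z) = z := fun z => DFunLike.congr_fun (GF hρ) z
  rwa [e, e] at this

/-- embedding of the group -/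
noncomputable def inG (ρ : BraidGroupB n hn →* WB n) : BraidGroupB n hn →* SD n ρ where
  toFun g := ⟨⊥, g⟩
  map_one' := rfl
  map_mul' g h := by
    rw [SD.mk_mul, OrderIso.map_bot, sup_bot_eq]

theorem FF_UU (hρ : RhoOK ρ) (g : BraidGroupB n hn) : FF hρ (UU hn g) = ⟨⊥, g⟩ := by
  have : (Units.map (FF hρ)).comp (UU hn) = (inG ρ).toHomUnits := by
    apply PresentedGroup.ext
    intro i
    apply Units.ext
    show FF hρ (UU hn (PresentedGroup.of i) : _) = ⟨⊥, PresentedGroup.of i⟩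
    rw [UU_of]
    rfl
  exact congrArg Units.val (DFunLike.congr_fun this g)

theorem FF_ep (hρ : RhoOK ρ) (x y : PM n) : FF hρ (ep hn x.1 y.1) = ⟨BE x.1 y.1, 1⟩ := by
  have tr : ∀ g, FF hρ (ep hn ((ρ g).1 x).1 ((ρ g).1 y).1) =
      ⟨BE ((ρ g).1 x).1 ((ρ g).1 y).1, 1⟩ → FF hρ (ep hn x.1 y.1) = ⟨BE x.1 y.1, 1⟩ := by
    intro g h
    rw [← ep_act hρ, ← BPact_BE] at h
    have h2 : FF hρ (UU hn g) * FF hρ (ep hn x.1 y.1) =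
        FF hρ (cj (UU hn g) (ep hn x.1 y.1)) * FF hρ (UU hn g) := by
      rw [← map_mul, ← map_mul, cj_swap]
    rw [h, FF_UU, SD.mk_mul] at h2
    generalize FF hρ (ep hn x.1 y.1) = p at *
    obtain ⟨I, k⟩ := p
    rw [SD.mk_mul] at h2
    have h3 := congrArg SD.fst h2
    have h4 := congrArg SD.snd h2
    dsimp only at h3 h4
    rw [OrderIso.map_bot, sup_bot_eq, bot_sup_eq] at h3
    have h5 : k = 1 := by
      rw [one_mul] at h4
      exact mul_eq_left.1 h4
    rw [h5, (BPact (ρ g)).injective h3]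
  by_cases h1 : x.1 = y.1
  · rw [h1, ep_self, map_one, SD.one_def]
    congr 1
    symm
    rw [eq_bot_iff, BE_le]
  · by_cases h2 : x.1 = -y.1
    · obtain ⟨g, hg, -⟩ := exists_move hρ y ⟨1, (p1 hn).pm⟩
      apply tr g
      have hx : x = y.neg := Subtype.ext h2
      rw [hx, rho_neg, hg]
      show FF hρ (ep hn (-1) 1) = ⟨BE (-1) 1, 1⟩
      rw [ep0]; rfl
    · obtain ⟨g, e1, e2⟩ := exists_two hρ x y ⟨h1, h2⟩
      apply tr g
      rw [e1, e2, ep1]; rfl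

theorem FF_Phi (hρ : RhoOK ρ) (I : BP n) : FF hρ (Phi hn I) = ⟨I, 1⟩ := by
  have key : ∀ l : List (PM n × PM n), ∃ J : BP n, FF hρ ((l.map (fac hn I)).prod) = ⟨J, 1⟩ ∧
      J ≤ I ∧ ∀ p ∈ l, I.1 p.1 p.2 → J.1 p.1 p.2 := by
    intro l
    induction l with
    | nil => exact ⟨⊥, by simp [SD.one_def], bot_le, by simp⟩
    | cons a l ih =>
      obtain ⟨J, h1, h2, h3⟩ := ih
      rw [List.map_cons, List.prod_cons, map_mul, h1]
      by_cases ha : I.1 a.1 a.2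
      · have : fac hn I a = ep hn a.1.1 a.2.1 := if_pos ha
        rw [this, FF_ep, SD.mk_mul, map_one, BPact_one, mul_one]
        refine ⟨_, rfl, sup_le ((BE_le _ _ _).2 ha) h2, ?_⟩
        intro p hp hI
        rw [← BE_le]
        rcases List.mem_cons.1 hp with rfl | hp
        · exact le_sup_left
        · exact le_trans ((BE_le _ _ _).2 (h3 p hp hI)) le_sup_right
      · have : fac hn I a = 1 := if_neg ha
        rw [this, map_one, one_mul]
        refine ⟨_, rfl, h2, ?_⟩
        intro p hp hI
        rcases List.mem_cons.1 hp with rfl | hp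
        · exact absurd hI ha
        · exact h3 p hp hI
  obtain ⟨J, h1, h2, h3⟩ := key (allPairs n)
  have : J = I := le_antisymm h2 (fun {x y} h => h3 (x, y) (mem_allPairs _) h)
  rw [← this] at h1 ⊢
  convert h1 using 1
  rw [this]; rfl

theorem FF_surj (hρ : RhoOK ρ) : Function.Surjective (FF hρ) := by
  rintro ⟨I, g⟩
  refine ⟨Phi hn I * UU hn g, ?_⟩
  rw [map_mul, FF_Phi, FF_UU, SD.mk_mul, OrderIso.map_bot, sup_bot_eq, one_mul]

end Phi

/-- The tied monoid of type B, presented by (BB0)–(BB3) and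
(TB1)–(TB9), is the semidirect product `Pₙᴮ ⋊ Bₙᴮ`: for the homomorphism
`π : Bₙᴮ → Perm [±n]` with `π(σ₀)` the transposition `(-1, 1)` and `π(σᵢ)` (for `i ≥ 1`)
the double transposition swapping `i, i+1` and `-i, -(i+1)`, there is a bijection
`F : TB → Pₙᴮ × Bₙᴮ` with `F(1) = (⊥, 1)`, `F(sᵢ) = (⊥, σᵢ)`, `F(sᵢ') = (⊥, σᵢ⁻¹)`,
`F(θ₀) = (ε_{-1,1}, 1)`, `F(θᵢ) = (ε_{i,i+1}, 1)` for `i ≥ 1`, and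
`F(x·y) = (F(x)₁ ·_B (π(F(x)₂) • F(y)₁), F(x)₂ · F(y)₂)`, where `·_B` is the
least-upper-bound product on `Pₙᴮ`. -/
theorem tiedMonoidTypeB_semidirect (n : ℕ) (hn : 2 ≤ n)
    (π : BraidGroupB n hn →* Equiv.Perm (PM n))
    (hπ0 : π (PresentedGroup.of ⟨0, by omega⟩) =
      Equiv.swap (PM.neg (pmOne n hn)) (pmOne n hn))
    (hπ : ∀ i : Fin n, ∀ hi : 1 ≤ i.1,
      π (PresentedGroup.of i) =
        Equiv.swap (pmA i hi) (pmB i) *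
          Equiv.swap (PM.neg (pmA i hi)) (PM.neg (pmB i))) :
    ∃ F : PresentedMonoid (TBRel n hn) → Setoid (PM n) × BraidGroupB n hn,
      Function.Injective F ∧
      Set.range F = {p | IsBPart p.1} ∧
      F 1 = (⊥, 1) ∧
      (∀ i : Fin n,
        F (PresentedMonoid.of (TBRel n hn) (TBGen.s i)) = (⊥, PresentedGroup.of i)) ∧
      (∀ i : Fin n,
        F (PresentedMonoid.of (TBRel n hn) (TBGen.s' i)) =
          (⊥, (PresentedGroup.of i)⁻¹)) ∧
      F (PresentedMonoid.of (TBRel n hn) (TBGen.θ ⟨0, by omega⟩)) =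
        (eps (PM.neg (pmOne n hn)) (pmOne n hn), 1) ∧
      (∀ i : Fin n, ∀ hi : 1 ≤ i.1,
        F (PresentedMonoid.of (TBRel n hn) (TBGen.θ i)) = (eps (pmA i hi) (pmB i), 1)) ∧
      ∀ x y : PresentedMonoid (TBRel n hn),
        (F (x * y)).2 = (F x).2 * (F y).2 ∧
        IsLeast {K | IsBPart K ∧ (F x).1 ≤ K ∧ permAct (π ((F x).2)) ((F y).1) ≤ K}
          ((F (x * y)).1) := by
  have h := pi_gen π hπ0 hπ
  let ρ : BraidGroupB n hn →* WB n := π.codRestrict (WB n) (pi_mem π h)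
  have hρ : RhoOK ρ := h
  refine ⟨fun x => ((FF hρ x).fst.1, (FF hρ x).snd), ?_, ?_, ?_, ?_, ?_, ?_, ?_, ?_⟩
  · intro x y hxy
    apply FF_inj hρ
    have e1 := congrArg Prod.fst hxy
    have e2 := congrArg Prod.snd hxy
    exact SD.ext (Subtype.ext e1) e2
  · ext p
    constructor
    · rintro ⟨x, rfl⟩
      exact (FF hρ x).fst.2
    · intro hp
      obtain ⟨x, hx⟩ := FF_surj hρ ⟨⟨p.1, hp⟩, p.2⟩
      refine ⟨x, ?_⟩
      show ((FF hρ x).fst.1, (FF hρ x).snd) = p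
      rw [hx]
  · show ((FF hρ 1).fst.1, (FF hρ 1).snd) = _
    rw [map_one]
    exact Prod.ext (BP.bot_val n) rfl
  · intro i
    exact Prod.ext (BP.bot_val n) rfl
  · intro i
    exact Prod.ext (BP.bot_val n) rfl
  · refine Prod.ext ?_ rfl
    have e := BE_eq_eps (PM.neg (pmOne n hn)) (pmOne n hn) (by
      intro hh
      have := congrArg Subtype.val hh
      simp [PM.neg, pmOne] at this)
    rw [← e]
    rfl
  · intro i hi
    refine Prod.ext ?_ rfl
    have e := BE_eq_eps (pmA i hi) (pmB i) (by
      intro hh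
      have := congrArg Subtype.val hh
      simp [pmA, pmB] at this)
    rw [← e]
    show (BE (lo i.1) (i.1 + 1) : BP n).1 = (BE (i.1 : ℤ) (i.1 + 1) : BP n).1
    have : lo i.1 = (i.1 : ℤ) := by
      unfold lo
      split_ifs <;> omega
    rw [this]
  · intro x y
    have hm : FF hρ (x * y) = FF hρ x * FF hρ y := map_mul _ _ _
    have h1 : (FF hρ (x * y)).fst = (FF hρ x).fst ⊔ BPact (ρ (FF hρ x).snd) (FF hρ y).fst := by
      rw [hm, SD.mul_fst]
    refine ⟨?_, ⟨(FF hρ (x * y)).fst.2, ?_, ?_⟩, ?_⟩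
    · show (FF hρ (x * y)).snd = _
      rw [hm, SD.mul_snd]
    · have : (FF hρ x).fst ≤ (FF hρ (x * y)).fst := h1 ▸ le_sup_left
      exact this
    · have : BPact (ρ (FF hρ x).snd) (FF hρ y).fst ≤ (FF hρ (x * y)).fst := h1 ▸ le_sup_right
      exact this
    · rintro K ⟨hK, k1, k2⟩
      have a1 : (FF hρ x).fst ≤ (⟨K, hK⟩ : BP n) := k1
      have a2 : BPact (ρ (FF hρ x).snd) (FF hρ y).fst ≤ (⟨K, hK⟩ : BP n) := k2
      have : (FF hρ (x * y)).fst ≤ (⟨K, hK⟩ : BP n) := h1 ▸ sup_le a1 a2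
      exact this
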